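/- Let ρ^{ABCD} be a state of a quadripartite quantum system on finite-dimensional Hilbert spaces satisfying S(B|A) + S(B|CD) = 0, S(A|B) + S(A|CD) = 0 and I(A;B|D) = 0. Then S(D) + S(CD) ≥ S(AB) + S(ABC). -/

import Mathlib

open scoped BigOperators ComplexOrder

/-- Von Neumann entropy (base 2) of a matrix: for a Hermitian matrix, the Shannon
entropy of its eigenvalues; junk value `0` for non-Hermitian matrices. -/
noncomputable def vNEntropy {n : Type*} [Fintype n] [DecidableEq n] (M : Matrix n n ℂ) : ℝ :=
  if h : M.IsHermitian then -∑ i, (h.eigenvalues i) * Real.logb 2 (h.eigenvalues i) else 0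

/-- A density matrix: positive semidefinite with trace one. -/
def IsState {n : Type*} [Fintype n] [DecidableEq n] (M : Matrix n n ℂ) : Prop :=
  M.PosSemidef ∧ M.trace = 1

section Quad

variable {A B C D : Type*} [Fintype A] [DecidableEq A] [Fintype B] [DecidableEq B]
  [Fintype C] [DecidableEq C] [Fintype D] [DecidableEq D]
  (ρ : Matrix (A × B × C × D) (A × B × C × D) ℂ)

/-- Entropies of the 15 marginals of a quadripartite state. -/
noncomputable def SA : ℝ :=
  vNEntropy (Matrix.of fun a a' : A => ∑ b, ∑ c, ∑ d, ρ (a, b, c, d) (a', b, c, d))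
noncomputable def SB : ℝ :=
  vNEntropy (Matrix.of fun b b' : B => ∑ a, ∑ c, ∑ d, ρ (a, b, c, d) (a, b', c, d))
noncomputable def SC : ℝ :=
  vNEntropy (Matrix.of fun c c' : C => ∑ a, ∑ b, ∑ d, ρ (a, b, c, d) (a, b, c', d))
noncomputable def SD : ℝ :=
  vNEntropy (Matrix.of fun d d' : D => ∑ a, ∑ b, ∑ c, ρ (a, b, c, d) (a, b, c, d'))
noncomputable def SAB : ℝ :=
  vNEntropy (Matrix.of fun p q : A × B => ∑ c, ∑ d, ρ (p.1, p.2, c, d) (q.1, q.2, c, d))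
noncomputable def SAC : ℝ :=
  vNEntropy (Matrix.of fun p q : A × C => ∑ b, ∑ d, ρ (p.1, b, p.2, d) (q.1, b, q.2, d))
noncomputable def SAD : ℝ :=
  vNEntropy (Matrix.of fun p q : A × D => ∑ b, ∑ c, ρ (p.1, b, c, p.2) (q.1, b, c, q.2))
noncomputable def SBC : ℝ :=
  vNEntropy (Matrix.of fun p q : B × C => ∑ a, ∑ d, ρ (a, p.1, p.2, d) (a, q.1, q.2, d))
noncomputable def SBD : ℝ :=
  vNEntropy (Matrix.of fun p q : B × D => ∑ a, ∑ c, ρ (a, p.1, c, p.2) (a, q.1, c, q.2))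
noncomputable def SCD : ℝ :=
  vNEntropy (Matrix.of fun p q : C × D => ∑ a, ∑ b, ρ (a, b, p.1, p.2) (a, b, q.1, q.2))
noncomputable def SABC : ℝ :=
  vNEntropy (Matrix.of fun p q : A × B × C =>
    ∑ d, ρ (p.1, p.2.1, p.2.2, d) (q.1, q.2.1, q.2.2, d))
noncomputable def SABD : ℝ :=
  vNEntropy (Matrix.of fun p q : A × B × D =>
    ∑ c, ρ (p.1, p.2.1, c, p.2.2) (q.1, q.2.1, c, q.2.2))
noncomputable def SACD : ℝ :=
  vNEntropy (Matrix.of fun p q : A × C × D =>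
    ∑ b, ρ (p.1, b, p.2.1, p.2.2) (q.1, b, q.2.1, q.2.2))
noncomputable def SBCD : ℝ :=
  vNEntropy (Matrix.of fun p q : B × C × D =>
    ∑ a, ρ (a, p.1, p.2.1, p.2.2) (a, q.1, q.2.1, q.2.2))
noncomputable def SABCD : ℝ := vNEntropy ρ

end Quad

/-!
Purify `ρ` by a system `E`. Then `S(CD) = S(ABE)` and `S(BCD) = S(AE)`, so the first two hypotheses
say that strong subadditivity for `ABE` is saturated both as `I(B;E|A) = 0` and as `I(A;E|B) = 0`.
Strong subadditivity is proved by maximizing, for each `t > 0`, a concave quadratic form whose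
maximum is a resolvent of the relative modular operator; in the equality case the maximizers before
and after a partial trace agree, which gives `τ_ABE = √τ_AB T_AE √τ_AB` and likewise with `T'_BE`.

The coefficients of `T` and `T'` with respect to a basis of `E` are commuting operators on `A` and
on `B` that act alike on `τ_AB`. Their joint spectral projections are therefore measurements of `A`
and of `B` which always give the same outcome `j`, and given `j` the systems `A` and `E` are
independent. Measuring `j` on `A`,

* `S(DE) ≤ ∑ⱼ S(ρ_DE^j)`, and `S(ρ_DE^j) ≤ S(ρ_D^j) + S(ρ_E^j)` up to normalization;
* `∑ⱼ S(ρ_E^j) = S(AE) - S(A)` up to the same normalization, by independence;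
* `∑ⱼ S(ρ_D^j) ≤ S(D)`, since `I(A;B|D) = 0` and the outcome can also be read off from `B`.

Hence `S(ABC) + S(A) = S(DE) + S(A) ≤ S(D) + S(AE) = S(D) + S(BCD)`, which is the claim because
`S(AB) - S(A) + S(BCD) - S(CD) = 0`.
-/

open Matrix Kronecker

/-! ### Entropy and spectral decompositions -/

/-- Von Neumann entropy in natural units, read off from the roots of the characteristic
polynomial, so that it is defined for every square matrix. -/
noncomputable def entropy {n : Type*} [Fintype n] [DecidableEq n] (M : Matrix n n ℂ) : ℝ :=
  (M.charpoly.roots.map fun z : ℂ => Real.negMulLog z.re).sum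

/-- An orthonormal eigenbasis (the columns of `U`) and the eigenvalues `d` of a positive
semidefinite matrix `M`. Compared with `Matrix.IsHermitian.eigenvectorUnitary`, the decomposition
is data, so that decompositions of related matrices can be chosen compatibly. -/
structure SpectralDecomp {n : Type*} [Fintype n] [DecidableEq n] (M : Matrix n n ℂ) where
  U : Matrix n n ℂ
  d : n → ℝ
  conjTranspose_mul_self : Uᴴ * U = 1
  nonneg : ∀ i, 0 ≤ d i
  eq : M = U * diagonal (fun i => (d i : ℂ)) * Uᴴ

section Entropy

variable {m n o : Type*} [Fintype m] [DecidableEq m] [Fintype n] [DecidableEq n]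
  [Fintype o] [DecidableEq o]

lemma entropy_mul_comm (X : Matrix m n ℂ) (Y : Matrix n m ℂ) :
    entropy (X * Y) = entropy (Y * X) := by
  have sum_roots_X_pow_mul (k : ℕ) {p : Polynomial ℂ} (hp : p.Monic) :
      ((Polynomial.X ^ k * p).roots.map fun z : ℂ => Real.negMulLog z.re).sum =
        (p.roots.map fun z : ℂ => Real.negMulLog z.re).sum := by
    rw [Polynomial.roots_mul (mul_ne_zero (pow_ne_zero _ Polynomial.X_ne_zero) hp.ne_zero)]
    simp [Multiset.map_nsmul, Multiset.sum_nsmul]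
  have h := congrArg (fun p : Polynomial ℂ =>
    (p.roots.map fun z : ℂ => Real.negMulLog z.re).sum) (charpoly_mul_comm' X Y)
  simp only [sum_roots_X_pow_mul _ (charpoly_monic _)] at h
  exact h

lemma entropy_diagonal (d : n → ℝ) :
    entropy (diagonal fun i => (d i : ℂ)) = ∑ i, Real.negMulLog (d i) := by
  rw [entropy, charpoly_diagonal,
    Polynomial.roots_prod _ _ (Finset.prod_ne_zero_iff.2 fun i _ => Polynomial.X_sub_C_ne_zero _)]
  simp only [Polynomial.roots_X_sub_C, Multiset.bind_singleton, Multiset.map_map]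
  rfl

lemma entropy_transpose (M : Matrix n n ℂ) : entropy Mᵀ = entropy M := by
  rw [entropy, charpoly_transpose, entropy]

lemma entropy_isometry {V : Matrix m n ℂ} (hV : Vᴴ * V = 1) (M : Matrix n n ℂ) :
    entropy (V * M * Vᴴ) = entropy M := by
  rw [entropy_mul_comm, ← Matrix.mul_assoc, hV, Matrix.one_mul]

lemma entropy_submatrix (e : m ≃ n) (M : Matrix n n ℂ) :
    entropy (M.submatrix e e) = entropy M := by
  have h : (M.submatrix e e).charpoly = M.charpoly := charpoly_reindex e.symm M
  rw [entropy, h, entropy]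

lemma entropy_blockDiagonal (M : o → Matrix n n ℂ) :
    entropy (blockDiagonal M) = ∑ k, entropy (M k) := by
  have h : (blockDiagonal M).charpoly = ∏ k, (M k).charpoly := by
    simp only [charpoly, ← det_blockDiagonal]
    congr 1
    ext ⟨i, k⟩ ⟨j, l⟩
    by_cases hkl : k = l <;> by_cases hij : i = j <;>
      simp [hkl, hij, blockDiagonal_apply]
  rw [entropy, h,
    Polynomial.roots_prod _ _ (Finset.prod_ne_zero_iff.2 fun k _ => (charpoly_monic _).ne_zero),
    Multiset.map_bind, Multiset.sum_bind]
  rfl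

lemma log_two_mul_vNEntropy {M : Matrix n n ℂ} (hM : M.IsHermitian) :
    Real.log 2 * vNEntropy M = entropy M := by
  rw [vNEntropy, dif_pos hM, entropy, hM.roots_charpoly_eq_eigenvalues, Multiset.map_map]
  change _ = ∑ i, Real.negMulLog (hM.eigenvalues i)
  rw [← Finset.sum_neg_distrib, Finset.mul_sum]
  refine Finset.sum_congr rfl fun i _ => ?_
  have : Real.log 2 ≠ 0 := (Real.log_pos one_lt_two).ne'
  rw [Real.negMulLog, Real.logb]
  field_simp

end Entropy

namespace SpectralDecomp

variable {m n : Type*} [Fintype m] [DecidableEq m] [Fintype n] [DecidableEq n] {M : Matrix n n ℂ}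

lemma nonempty_of_posSemidef (hM : M.PosSemidef) : Nonempty (SpectralDecomp M) := by
  refine ⟨hM.1.eigenvectorUnitary, hM.1.eigenvalues, Unitary.coe_star_mul_self _,
    hM.eigenvalues_nonneg, ?_⟩
  conv_lhs => rw [hM.1.spectral_theorem, Unitary.conjStarAlgAut_apply]
  rfl

lemma mul_conjTranspose_self (S : SpectralDecomp M) : S.U * S.Uᴴ = 1 :=
  mul_eq_one_comm.1 S.conjTranspose_mul_self

lemma conjTranspose_mul_eq (S : SpectralDecomp M) :
    S.Uᴴ * M = diagonal (fun i => (S.d i : ℂ)) * S.Uᴴ := by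
  obtain ⟨U, d, hU, -, rfl⟩ := S
  rw [← Matrix.mul_assoc, ← Matrix.mul_assoc, hU, Matrix.one_mul]

lemma mul_U_eq (S : SpectralDecomp M) :
    M * S.U = S.U * diagonal (fun i => (S.d i : ℂ)) := by
  obtain ⟨U, d, hU, -, rfl⟩ := S
  rw [Matrix.mul_assoc, hU, Matrix.mul_one]

lemma entropy_eq (S : SpectralDecomp M) : entropy M = ∑ i, Real.negMulLog (S.d i) := by
  conv_lhs => rw [S.eq]
  rw [entropy_isometry S.conjTranspose_mul_self, entropy_diagonal]

lemma trace_eq (S : SpectralDecomp M) : M.trace = ((∑ i, S.d i : ℝ) : ℂ) := by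
  conv_lhs => rw [S.eq]
  rw [Matrix.trace_mul_comm, ← Matrix.mul_assoc, S.conjTranspose_mul_self, Matrix.one_mul,
    trace_diagonal, Complex.ofReal_sum]

/-- The spectral decomposition of `M * M` in the same eigenbasis. -/
def sq (S : SpectralDecomp M) : SpectralDecomp (M * M) where
  U := S.U
  d i := S.d i * S.d i
  conjTranspose_mul_self := S.conjTranspose_mul_self
  nonneg i := mul_self_nonneg _
  eq := by
    simp only [Complex.ofReal_mul, ← diagonal_mul_diagonal]
    rw [← Matrix.mul_assoc, ← S.mul_U_eq, Matrix.mul_assoc, Matrix.mul_assoc,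
      ← S.conjTranspose_mul_eq, ← Matrix.mul_assoc S.U, S.mul_conjTranspose_self, Matrix.one_mul]

/-- The spectral decomposition of `M ⊗ 1` in the eigenbasis of `M` tensored with the standard
basis. -/
def kroneckerOne (S : SpectralDecomp M) : SpectralDecomp (M ⊗ₖ (1 : Matrix m m ℂ)) where
  U := S.U ⊗ₖ 1
  d i := S.d i.1
  conjTranspose_mul_self := by
    rw [conjTranspose_kronecker, conjTranspose_one, ← mul_kronecker_mul, S.conjTranspose_mul_self,
      Matrix.one_mul, one_kronecker_one]
  nonneg i := S.nonneg i.1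
  eq := by
    have h : (diagonal fun i : n × m => (S.d i.1 : ℂ)) =
        (diagonal fun i => (S.d i : ℂ)) ⊗ₖ (1 : Matrix m m ℂ) := by
      rw [← diagonal_one, diagonal_kronecker_diagonal]
      simp
    rw [h, conjTranspose_kronecker, conjTranspose_one, ← mul_kronecker_mul, ← mul_kronecker_mul,
      Matrix.one_mul, Matrix.one_mul, ← S.eq]

end SpectralDecomp

section PosSemidef

variable {n k : Type*} [Fintype n] [Fintype k] {M : Matrix n n ℂ}

open scoped MatrixOrder in
lemma exists_posSemidef_mul_self_eq (hM : M.PosSemidef) :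
    ∃ q : Matrix n n ℂ, q.PosSemidef ∧ q * q = M := by
  classical
  exact ⟨CFC.sqrt M, nonneg_iff_posSemidef.1 (CFC.sqrt_nonneg M),
    CFC.sqrt_mul_sqrt_self M hM.nonneg⟩

lemma exists_eq_mul_conjTranspose (hM : M.PosSemidef) : ∃ q : Matrix n n ℂ, M = q * qᴴ := by
  obtain ⟨q, hq, rfl⟩ := exists_posSemidef_mul_self_eq hM
  exact ⟨q, by rw [hq.1.eq]⟩

lemma mul_eq_zero_of_trace_conjTranspose_mul_mul_eq_zero (hM : M.PosSemidef) {N : Matrix n k ℂ}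
    (h : (Nᴴ * M * N).trace = 0) : M * N = 0 := by
  obtain ⟨q, hq, rfl⟩ := exists_posSemidef_mul_self_eq hM
  have hqN : q * N = 0 := by
    rw [← trace_conjTranspose_mul_self_eq_zero_iff, ← h, conjTranspose_mul, hq.1.eq]
    simp only [Matrix.mul_assoc]
  rw [Matrix.mul_assoc, hqN, Matrix.mul_zero]

end PosSemidef

section EntropyProduct

variable {m n : Type*} [Fintype m] [DecidableEq m] [Fintype n] [DecidableEq n]

lemma entropy_smul {M : Matrix n n ℂ} (hM : M.PosSemidef) (r : ℝ) :
    entropy ((r : ℂ) • M) = r * entropy M + Real.negMulLog r * M.trace.re := by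
  obtain ⟨S⟩ := SpectralDecomp.nonempty_of_posSemidef hM
  have h : (r : ℂ) • M = S.U * diagonal (fun i => ((r * S.d i : ℝ) : ℂ)) * S.Uᴴ := by
    conv_lhs => rw [S.eq]
    rw [← Matrix.smul_mul, ← Matrix.mul_smul, ← diagonal_smul]
    simp [Pi.smul_def]
  rw [h, entropy_isometry S.conjTranspose_mul_self, entropy_diagonal, S.entropy_eq, S.trace_eq,
    Complex.ofReal_re, Finset.mul_sum, Finset.mul_sum, ← Finset.sum_add_distrib]
  refine Finset.sum_congr rfl fun i _ => ?_
  rw [Real.negMulLog_mul]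
  ring

lemma entropy_kronecker {M : Matrix m m ℂ} {N : Matrix n n ℂ} (hM : M.PosSemidef)
    (hN : N.PosSemidef) :
    entropy (M ⊗ₖ N) = M.trace.re * entropy N + entropy M * N.trace.re := by
  obtain ⟨S⟩ := SpectralDecomp.nonempty_of_posSemidef hM
  have hconj : M ⊗ₖ N = (S.U ⊗ₖ (1 : Matrix n n ℂ)) * ((diagonal fun i => (S.d i : ℂ)) ⊗ₖ N) *
      (S.U ⊗ₖ (1 : Matrix n n ℂ))ᴴ := by
    rw [conjTranspose_kronecker, conjTranspose_one, ← mul_kronecker_mul, ← mul_kronecker_mul,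
      Matrix.one_mul, Matrix.mul_one, ← S.eq]
  have hU : (S.U ⊗ₖ (1 : Matrix n n ℂ))ᴴ * (S.U ⊗ₖ (1 : Matrix n n ℂ)) = 1 :=
    S.kroneckerOne.conjTranspose_mul_self
  have hblock : (diagonal fun i => (S.d i : ℂ)) ⊗ₖ N =
      (blockDiagonal fun i => (S.d i : ℂ) • N).submatrix (Equiv.prodComm m n)
        (Equiv.prodComm m n) := by
    ext ⟨i, x⟩ ⟨j, y⟩
    by_cases hij : i = j <;> simp [blockDiagonal_apply, hij]
  rw [hconj, entropy_isometry hU, hblock,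
    entropy_submatrix, entropy_blockDiagonal, S.entropy_eq, S.trace_eq, Complex.ofReal_re,
    Finset.sum_mul, Finset.sum_mul, ← Finset.sum_add_distrib]
  exact Finset.sum_congr rfl fun i _ => entropy_smul hN _

end EntropyProduct

/-! ### Partial traces -/

/-- The partial trace over the second tensor factor. -/
def traceRight {X Y : Type*} [Fintype Y] (M : Matrix (X × Y) (X × Y) ℂ) : Matrix X X ℂ :=
  of fun x x' => ∑ y, M (x, y) (x', y)

/-- The partial trace over the middle factor of `A ⊗ B ⊗ C`. -/
def traceMiddle {A B C : Type*} [Fintype B] (M : Matrix ((A × B) × C) ((A × B) × C) ℂ) :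
    Matrix (A × C) (A × C) ℂ :=
  of fun p q => ∑ b, M ((p.1, b), p.2) ((q.1, b), q.2)

/-- An operator on `A ⊗ C`, regarded as an operator on `A ⊗ B ⊗ C` acting trivially on `B`. -/
def ampMiddle {A C : Type*} (B : Type*) [DecidableEq B] (K : Matrix (A × C) (A × C) ℂ) :
    Matrix ((A × B) × C) ((A × B) × C) ℂ :=
  of fun p q => if p.1.2 = q.1.2 then K (p.1.1, p.2) (q.1.1, q.2) else 0

section TraceRight

variable {X Y : Type*} [Fintype Y]

lemma posSemidef_traceRight {M : Matrix (X × Y) (X × Y) ℂ} (hM : M.PosSemidef) :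
    (traceRight M).PosSemidef := by
  have h : traceRight M = ∑ y, M.submatrix (fun x => (x, y)) (fun x => (x, y)) := by
    ext x x'
    simp [traceRight, Matrix.sum_apply]
  rw [h]
  exact posSemidef_sum _ fun y _ => hM.submatrix _

variable [Fintype X]

lemma trace_traceRight (M : Matrix (X × Y) (X × Y) ℂ) : (traceRight M).trace = M.trace := by
  simp [traceRight, Matrix.trace, Fintype.sum_prod_type]

variable [DecidableEq Y]

lemma traceRight_kronecker_mul_mul_kronecker {m : Type*} (K : Matrix m X ℂ) (L : Matrix X m ℂ)
    (M : Matrix (X × Y) (X × Y) ℂ) :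
    traceRight ((K ⊗ₖ (1 : Matrix Y Y ℂ)) * M * (L ⊗ₖ (1 : Matrix Y Y ℂ))) =
      K * traceRight M * L := by
  ext x x'
  simp only [traceRight, of_apply, Matrix.mul_apply, Fintype.sum_prod_type, kroneckerMap_apply,
    Matrix.one_apply, mul_ite, mul_one, mul_zero, ite_mul, zero_mul, Finset.sum_ite_eq,
    Finset.sum_ite_eq', Finset.mem_univ, if_true, Finset.mul_sum, Finset.sum_mul]
  rw [Finset.sum_comm]
  exact Finset.sum_congr rfl fun x _ => Finset.sum_comm

lemma traceRight_mul_kronecker_one (M : Matrix (X × Y) (X × Y) ℂ) (K : Matrix X X ℂ) :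
    traceRight (M * (K ⊗ₖ (1 : Matrix Y Y ℂ))) = traceRight M * K := by
  classical
  simpa using traceRight_kronecker_mul_mul_kronecker 1 K M

lemma traceRight_kronecker_one_mul (K : Matrix X X ℂ) (M : Matrix (X × Y) (X × Y) ℂ) :
    traceRight ((K ⊗ₖ (1 : Matrix Y Y ℂ)) * M) = K * traceRight M := by
  classical
  simpa using traceRight_kronecker_mul_mul_kronecker K 1 M

lemma mul_kronecker_one_eq_zero {m : Type*} [Finite m] {M : Matrix (X × Y) (X × Y) ℂ}
    (hM : M.PosSemidef) {N : Matrix X m ℂ} (hN : traceRight M * N = 0) :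
    M * (N ⊗ₖ (1 : Matrix Y Y ℂ)) = 0 := by
  cases nonempty_fintype m
  refine mul_eq_zero_of_trace_conjTranspose_mul_mul_eq_zero hM ?_
  rw [conjTranspose_kronecker, conjTranspose_one, ← trace_traceRight,
    traceRight_kronecker_mul_mul_kronecker, Matrix.mul_assoc, hN, Matrix.mul_zero, trace_zero]

end TraceRight

section TraceMiddle

variable {A B C : Type*}

lemma posSemidef_traceMiddle [Fintype B] {M : Matrix ((A × B) × C) ((A × B) × C) ℂ}
    (hM : M.PosSemidef) : (traceMiddle M).PosSemidef := by
  have h : traceMiddle M =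
      ∑ b, M.submatrix (fun p : A × C => ((p.1, b), p.2)) (fun p => ((p.1, b), p.2)) := by
    ext p q
    simp [traceMiddle, Matrix.sum_apply]
  rw [h]
  exact posSemidef_sum _ fun b _ => hM.submatrix _

lemma traceMiddle_kronecker [Fintype B] (K : Matrix (A × B) (A × B) ℂ) (L : Matrix C C ℂ) :
    traceMiddle (K ⊗ₖ L) = traceRight K ⊗ₖ L := by
  ext p q
  simp [traceMiddle, traceRight, Finset.sum_mul]

lemma traceRight_traceMiddle [Fintype B] [Fintype C] (M : Matrix ((A × B) × C) ((A × B) × C) ℂ) :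
    traceRight (traceMiddle M) = traceRight (traceRight M) := by
  ext p q
  simp only [traceMiddle, traceRight, of_apply]
  exact Finset.sum_comm

lemma traceMiddle_traceRight_kronecker_one [Fintype B] [Fintype C] [DecidableEq C]
    (M : Matrix ((A × B) × C) ((A × B) × C) ℂ) :
    traceMiddle (traceRight M ⊗ₖ (1 : Matrix C C ℂ)) = traceRight (traceMiddle M) ⊗ₖ 1 := by
  rw [traceMiddle_kronecker, traceRight_traceMiddle]

section Amp

variable [DecidableEq B]

lemma conjTranspose_ampMiddle (K : Matrix (A × C) (A × C) ℂ) :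
    (ampMiddle B K)ᴴ = ampMiddle B Kᴴ := by
  ext p q
  by_cases h : p.1.2 = q.1.2 <;> simp [ampMiddle, h, Ne.symm]

lemma ampMiddle_sum_smul {ι : Type*} (s : Finset ι) (c : ι → ℂ)
    (K : ι → Matrix (A × C) (A × C) ℂ) :
    ampMiddle B (∑ i ∈ s, c i • K i) = ∑ i ∈ s, c i • ampMiddle B (K i) := by
  ext p q
  by_cases h : p.1.2 = q.1.2 <;> simp [ampMiddle, h, Matrix.sum_apply]

variable [Fintype A] [Fintype B] [Fintype C]

lemma ampMiddle_mul (K L : Matrix (A × C) (A × C) ℂ) :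
    ampMiddle B (K * L) = ampMiddle B K * ampMiddle B L := by
  ext p q
  by_cases h : p.1.2 = q.1.2 <;>
  simp [ampMiddle, Matrix.mul_apply, Fintype.sum_prod_type, h]

lemma trace_ampMiddle_mul (K : Matrix (A × C) (A × C) ℂ)
    (M : Matrix ((A × B) × C) ((A × B) × C) ℂ) :
    (ampMiddle B K * M).trace = (K * traceMiddle M).trace := by
  simp only [Matrix.trace, diag_apply, Matrix.mul_apply, Fintype.sum_prod_type, ampMiddle,
    traceMiddle, of_apply, ite_mul, zero_mul, Finset.mul_sum]
  refine Finset.sum_congr rfl fun a _ => ?_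
  rw [Finset.sum_comm]
  refine Finset.sum_congr rfl fun c _ => ?_
  rw [Finset.sum_comm]
  refine Finset.sum_congr rfl fun a' _ => ?_
  rw [Finset.sum_comm (γ := C)]
  refine Finset.sum_congr rfl fun b _ => ?_
  rw [Finset.sum_comm]
  simp

end Amp

end TraceMiddle

/-! ### A variational formula for relative entropy -/

/-- Spectral decompositions of two positive semidefinite matrices such that the support of the
first is contained in that of the second. -/
structure SpectralPair {n : Type*} [Fintype n] [DecidableEq n] (τ θ : Matrix n n ℂ) where
  state : SpectralDecomp τ
  ref : SpectralDecomp θ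
  support : ∀ i j, ref.d i = 0 → (ref.Uᴴ * τ) i j = 0

/-- The concave quadratic functional of `Y` whose maximum is `⟨τ, (L_θ + t R_τ)⁻¹ τ⟩`, where
`L` and `R` denote left and right multiplication. -/
noncomputable def resolventForm {n : Type*} [Fintype n] (τ θ : Matrix n n ℂ) (t : ℝ)
    (Y : Matrix n n ℂ) : ℝ :=
  2 * (Yᴴ * τ).trace.re - t * (Y * τ * Yᴴ).trace.re - (Yᴴ * θ * Y).trace.re

/-- The function of the relative modular operator `x = R_τ L_θ⁻¹` that describes the maximizer of
`resolventForm`. -/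
noncomputable def resolventFun (t x : ℝ) : ℝ := x / (1 + t * x)

namespace SpectralPair

variable {n : Type*} [Fintype n] [DecidableEq n] {τ θ : Matrix n n ℂ}

/-- The overlaps of the two eigenbases. -/
def overlap (P : SpectralPair τ θ) : Matrix n n ℂ := P.ref.Uᴴ * P.state.U

/-- A matrix in mixed coordinates: eigenbasis of `θ` on the left, of `τ` on the right. -/
def coords (P : SpectralPair τ θ) (Y : Matrix n n ℂ) : Matrix n n ℂ :=
  P.ref.Uᴴ * Y * P.state.U

/-- The matrix `f (R_τ L_θ⁻¹) 1`. On the kernel of `θ` the quotient of eigenvalues is the junk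
value `0`, so that for `f 0 = 0` the kernel is annihilated. -/
noncomputable def relMod (P : SpectralPair τ θ) (f : ℝ → ℝ) : Matrix n n ℂ :=
  P.ref.U * of (fun i j => P.overlap i j * f (P.state.d j / P.ref.d i)) * P.state.Uᴴ

/-- The maximum `⟨τ, (L_θ + t R_τ)⁻¹ τ⟩` of `resolventForm`. -/
noncomputable def resolventMax (P : SpectralPair τ θ) (t : ℝ) : ℝ :=
  ∑ i, ∑ j, Complex.normSq (P.overlap i j) * P.state.d j *
    resolventFun t (P.state.d j / P.ref.d i)

/-- The primitive `⟨1, R_τ log (L_θ + t R_τ) 1⟩` of `resolventMax`. It equals `Tr τ log θ` at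
`t = 0`, and its asymptotics at infinity contain `Tr τ log τ`. -/
noncomputable def potential (P : SpectralPair τ θ) (t : ℝ) : ℝ :=
  ∑ i, ∑ j, Complex.normSq (P.overlap i j) * P.state.d j *
    Real.log (P.ref.d i + t * P.state.d j)

variable (P : SpectralPair τ θ)

lemma coords_relMod (f : ℝ → ℝ) (i j : n) :
    P.coords (P.relMod f) i j = P.overlap i j * f (P.state.d j / P.ref.d i) := by
  have h (M : Matrix n n ℂ) : P.coords (P.ref.U * M * P.state.Uᴴ) =
      (P.ref.Uᴴ * P.ref.U) * M * (P.state.Uᴴ * P.state.U) := by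
    simp only [coords, Matrix.mul_assoc]
  rw [relMod, h, P.ref.conjTranspose_mul_self, P.state.conjTranspose_mul_self, Matrix.one_mul,
    Matrix.mul_one, of_apply]

lemma coords_state (i j : n) : P.coords τ i j = P.overlap i j * P.state.d j := by
  rw [coords, Matrix.mul_assoc, P.state.mul_U_eq, ← Matrix.mul_assoc, mul_diagonal, overlap]

lemma coords_mul_left {Q : Matrix n n ℂ} {e : n → ℂ}
    (hQ : P.ref.Uᴴ * Q = diagonal e * P.ref.Uᴴ) (Y : Matrix n n ℂ) (i j : n) :
    P.coords (Q * Y) i j = e i * P.coords Y i j := by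
  rw [coords, ← Matrix.mul_assoc, hQ, Matrix.mul_assoc, Matrix.mul_assoc, diagonal_mul,
    ← Matrix.mul_assoc, coords]

lemma coords_mul_right {w : Matrix n n ℂ} {e : n → ℂ}
    (hw : w * P.state.U = P.state.U * diagonal e) (Y : Matrix n n ℂ) (i j : n) :
    P.coords (Y * w) i j = P.coords Y i j * e j := by
  rw [coords, Matrix.mul_assoc, Matrix.mul_assoc, hw, ← Matrix.mul_assoc, ← Matrix.mul_assoc,
    mul_diagonal, coords]

lemma coords_injective : Function.Injective P.coords := by
  have h (Y : Matrix n n ℂ) : P.ref.U * P.coords Y * P.state.Uᴴ = Y := by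
    calc _ = (P.ref.U * P.ref.Uᴴ) * Y * (P.state.U * P.state.Uᴴ) := by
          simp only [coords, Matrix.mul_assoc]
      _ = Y := by rw [P.ref.mul_conjTranspose_self, P.state.mul_conjTranspose_self,
          Matrix.one_mul, Matrix.mul_one]
  intro Y Z hYZ
  rw [← h Y, ← h Z, hYZ]

lemma re_trace_conjTranspose_mul (Y Z : Matrix n n ℂ) :
    (Yᴴ * Z).trace.re = ∑ i, ∑ j, (star (P.coords Y i j) * P.coords Z i j).re := by
  have h : (Yᴴ * Z).trace = ((P.coords Y)ᴴ * P.coords Z).trace := by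
    have e : (P.coords Y)ᴴ * P.coords Z =
        P.state.Uᴴ * (Yᴴ * (P.ref.U * P.ref.Uᴴ) * Z * P.state.U) := by
      simp only [coords, conjTranspose_mul, conjTranspose_conjTranspose, Matrix.mul_assoc]
    rw [e, Matrix.trace_mul_comm P.state.Uᴴ, P.ref.mul_conjTranspose_self,
      Matrix.mul_one, Matrix.mul_assoc, P.state.mul_conjTranspose_self, Matrix.mul_one]
  rw [h, Matrix.trace]
  simp only [diag_apply, Matrix.mul_apply, Complex.re_sum, conjTranspose_apply]
  exact Finset.sum_comm

lemma sum_normSq_overlap (j : n) : ∑ i, Complex.normSq (P.overlap i j) = 1 := by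
  have h : P.overlapᴴ * P.overlap = 1 := by
    calc _ = P.state.Uᴴ * (P.ref.U * P.ref.Uᴴ) * P.state.U := by
          simp only [overlap, conjTranspose_mul, conjTranspose_conjTranspose, Matrix.mul_assoc]
      _ = 1 := by rw [P.ref.mul_conjTranspose_self, Matrix.mul_one, P.state.conjTranspose_mul_self]
  have hj := congrFun (congrFun h j) j
  simp only [Matrix.mul_apply, one_apply_eq, conjTranspose_apply, RCLike.star_def,
    ← Complex.normSq_eq_conj_mul_self] at hj
  exact_mod_cast hj

lemma overlap_mul_eq_zero {i : n} (hi : P.ref.d i = 0) (j : n) :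
    P.overlap i j * P.state.d j = 0 := by
  rw [← P.coords_state, coords, Matrix.mul_apply]
  exact Finset.sum_eq_zero fun k _ => by rw [P.support i k hi, zero_mul]

lemma normSq_overlap_mul_eq_zero_or (i j : n) :
    Complex.normSq (P.overlap i j) * P.state.d j = 0 ∨ 0 < P.state.d j ∧ 0 < P.ref.d i := by
  rcases (P.ref.nonneg i).eq_or_lt with hr | hr
  · rcases mul_eq_zero.1 (P.overlap_mul_eq_zero hr.symm j) with h | h
    · simp [h]
    · simp [Complex.ofReal_eq_zero.1 h]
  · rcases (P.state.nonneg j).eq_or_lt with hs | hs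
    · simp [← hs]
    · exact Or.inr ⟨hs, hr⟩

lemma mul_overlap_mul_resolventFun {t : ℝ} (ht : 0 ≤ t) (i j : n) :
    (P.ref.d i + t * P.state.d j) * (P.overlap i j * resolventFun t (P.state.d j / P.ref.d i)) =
      P.overlap i j * P.state.d j := by
  rcases (P.ref.nonneg i).eq_or_lt with hr | hr
  · rw [P.overlap_mul_eq_zero hr.symm]
    simp [← hr, resolventFun]
  · have hs := P.state.nonneg j
    have h : (P.ref.d i + t * P.state.d j) * resolventFun t (P.state.d j / P.ref.d i) =
        P.state.d j := by
      rw [resolventFun]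
      have : 0 < P.ref.d i + t * P.state.d j := by positivity
      field_simp
    rw [mul_left_comm]
    exact_mod_cast congrArg (fun x : ℝ => P.overlap i j * (x : ℂ)) h

lemma resolventForm_eq_sum_coords (t : ℝ) (Y : Matrix n n ℂ) :
    resolventForm τ θ t Y = ∑ i, ∑ j,
      (2 * (star (P.coords Y i j) * (P.overlap i j * P.state.d j)).re -
        (P.ref.d i + t * P.state.d j) * Complex.normSq (P.coords Y i j)) := by
  rw [resolventForm, Matrix.trace_mul_comm (Y * τ), Matrix.mul_assoc Yᴴ θ,
    P.re_trace_conjTranspose_mul, P.re_trace_conjTranspose_mul, P.re_trace_conjTranspose_mul]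
  simp only [Finset.mul_sum, ← Finset.sum_sub_distrib]
  refine Finset.sum_congr rfl fun i _ => Finset.sum_congr rfl fun j _ => ?_
  rw [P.coords_state, P.coords_mul_right P.state.mul_U_eq,
    P.coords_mul_left P.ref.conjTranspose_mul_eq]
  simp only [RCLike.star_def, Complex.mul_re, Complex.mul_im, Complex.conj_re, Complex.conj_im,
    Complex.ofReal_re, Complex.ofReal_im, Complex.normSq_apply]
  ring

lemma resolventMax_sub_resolventForm {t : ℝ} (ht : 0 ≤ t) (Y : Matrix n n ℂ) :
    P.resolventMax t - resolventForm τ θ t Y =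
      ∑ i, ∑ j, (P.ref.d i + t * P.state.d j) *
        Complex.normSq (P.coords Y i j - P.coords (P.relMod (resolventFun t)) i j) := by
  rw [P.resolventForm_eq_sum_coords, resolventMax]
  simp only [← Finset.sum_sub_distrib]
  refine Finset.sum_congr rfl fun i _ => Finset.sum_congr rfl fun j _ => ?_
  have h := P.mul_overlap_mul_resolventFun ht i j
  rw [← h, coords_relMod]
  have hre := congrArg Complex.re h
  have him := congrArg Complex.im h
  set f := resolventFun t (P.state.d j / P.ref.d i)
  simp only [RCLike.star_def, Complex.mul_re, Complex.mul_im, Complex.conj_re, Complex.conj_im,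
    Complex.ofReal_re, Complex.ofReal_im, Complex.normSq_apply, Complex.add_re, Complex.add_im,
    Complex.sub_re, Complex.sub_im] at *
  linear_combination -((P.overlap i j).re * f) * hre - (P.overlap i j).im * f * him

lemma resolventForm_le {t : ℝ} (ht : 0 ≤ t) (Y : Matrix n n ℂ) :
    resolventForm τ θ t Y ≤ P.resolventMax t := by
  rw [← sub_nonneg, P.resolventMax_sub_resolventForm ht]
  refine Finset.sum_nonneg fun i _ => Finset.sum_nonneg fun j _ => ?_
  have hr := P.ref.nonneg i
  have hs := P.state.nonneg j
  have := Complex.normSq_nonneg (P.coords Y i j - P.coords (P.relMod (resolventFun t)) i j)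
  positivity

lemma resolventForm_relMod {t : ℝ} (ht : 0 ≤ t) :
    resolventForm τ θ t (P.relMod (resolventFun t)) = P.resolventMax t := by
  have h := P.resolventMax_sub_resolventForm ht (P.relMod (resolventFun t))
  simp only [sub_self, map_zero, mul_zero, Finset.sum_const_zero] at h
  linarith

lemma coords_eq_of_resolventForm_eq {t : ℝ} (ht : 0 < t) {Y : Matrix n n ℂ}
    (hY : resolventForm τ θ t Y = P.resolventMax t) {i j : n}
    (hij : 0 < P.ref.d i ∨ 0 < P.state.d j) :
    P.coords Y i j = P.overlap i j * resolventFun t (P.state.d j / P.ref.d i) := by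
  have hw (i j) : 0 ≤ P.ref.d i + t * P.state.d j :=
    add_nonneg (P.ref.nonneg i) (mul_nonneg ht.le (P.state.nonneg j))
  have hsum := P.resolventMax_sub_resolventForm ht.le Y
  rw [hY, sub_self, eq_comm, Finset.sum_eq_zero_iff_of_nonneg fun i _ => Finset.sum_nonneg
    fun j _ => mul_nonneg (hw i j) (Complex.normSq_nonneg _)] at hsum
  have hzero := (Finset.sum_eq_zero_iff_of_nonneg fun j _ =>
    mul_nonneg (hw i j) (Complex.normSq_nonneg _)).1 (hsum i (Finset.mem_univ i)) j
    (Finset.mem_univ j)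
  have hpos : 0 < P.ref.d i + t * P.state.d j := by
    have hr := P.ref.nonneg i
    have hs := P.state.nonneg j
    rcases hij with h | h <;> positivity
  rw [← P.coords_relMod, ← sub_eq_zero, ← Complex.normSq_eq_zero]
  exact (mul_eq_zero.1 hzero).resolve_left hpos.ne'

lemma hasDerivAt_potential {t : ℝ} (ht : 0 < t) :
    HasDerivAt P.potential (P.resolventMax t) t := by
  unfold potential resolventMax
  refine HasDerivAt.fun_sum fun i _ => HasDerivAt.fun_sum fun j _ => ?_
  rcases P.normSq_overlap_mul_eq_zero_or i j with h | ⟨hs, hr⟩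
  · simpa only [h, zero_mul] using hasDerivAt_const t (0 : ℝ)
  · have haff : HasDerivAt (fun u : ℝ => P.ref.d i + u * P.state.d j) (P.state.d j) t := by
      simpa using ((hasDerivAt_id t).mul_const (P.state.d j)).const_add (P.ref.d i)
    have hpos : 0 < P.ref.d i + t * P.state.d j := by positivity
    refine ((haff.log hpos.ne').const_mul _).congr_deriv ?_
    rw [resolventFun]
    field_simp

lemma continuousOn_potential : ContinuousOn P.potential (Set.Ici 0) := by
  unfold potential
  refine continuousOn_finsetSum _ fun i _ => continuousOn_finsetSum _ fun j _ => ?_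
  rcases P.normSq_overlap_mul_eq_zero_or i j with h | ⟨hs, hr⟩
  · simpa only [h, zero_mul] using continuousOn_const
  · refine continuousOn_const.mul (ContinuousOn.log (by fun_prop) fun t ht => ?_)
    have : (0 : ℝ) ≤ t := ht
    positivity

lemma tendsto_potential :
    Filter.Tendsto (fun t => P.potential t - τ.trace.re * Real.log t) Filter.atTop
      (nhds (-entropy τ)) := by
  have marginal (f : n → ℝ) : ∑ j, P.state.d j * f j =
      ∑ i, ∑ j, Complex.normSq (P.overlap i j) * P.state.d j * f j := by
    rw [Finset.sum_comm]
    simp only [mul_assoc, ← Finset.sum_mul, P.sum_normSq_overlap, one_mul]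
  have hlim : -entropy τ = ∑ i, ∑ j,
      Complex.normSq (P.overlap i j) * P.state.d j * Real.log (P.state.d j) := by
    simp [← marginal, P.state.entropy_eq, Real.negMulLog]
  have hfun (t : ℝ) : P.potential t - τ.trace.re * Real.log t =
      ∑ i, ∑ j, Complex.normSq (P.overlap i j) * P.state.d j *
        (Real.log (P.ref.d i + t * P.state.d j) - Real.log t) := by
    rw [P.state.trace_eq, Complex.ofReal_re, Finset.sum_mul, marginal fun _ => Real.log t,
      potential]
    simp only [mul_sub, Finset.sum_sub_distrib]
  simp only [hfun, hlim]
  refine tendsto_finsetSum _ fun i _ => tendsto_finsetSum _ fun j _ => ?_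
  rcases P.normSq_overlap_mul_eq_zero_or i j with h | ⟨hs, hr⟩
  · simp [h]
  · have hdiv : Filter.Tendsto (fun t : ℝ => P.ref.d i * t⁻¹ + P.state.d j) Filter.atTop
        (nhds (P.state.d j)) := by
      simpa using (tendsto_inv_atTop_zero.const_mul (P.ref.d i)).add_const (P.state.d j)
    refine ((hdiv.log hs.ne').congr' ?_).const_mul _
    filter_upwards [Filter.eventually_gt_atTop 0] with t ht
    rw [← Real.log_div (by positivity) ht.ne']
    congr 1
    field_simp

lemma potential_zero :
    P.potential 0 = ∑ i, ((P.ref.Uᴴ * τ * P.ref.U) i i).re * Real.log (P.ref.d i) := by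
  have h : P.ref.Uᴴ * τ * P.ref.U =
      P.overlap * diagonal (fun j => (P.state.d j : ℂ)) * P.overlapᴴ := by
    simp only [overlap, conjTranspose_mul, conjTranspose_conjTranspose, Matrix.mul_assoc]
    rw [← Matrix.mul_assoc (diagonal _), ← P.state.conjTranspose_mul_eq,
      ← Matrix.mul_assoc P.state.U, ← Matrix.mul_assoc P.state.U, P.state.mul_conjTranspose_self,
      Matrix.one_mul]
  rw [potential]
  refine Finset.sum_congr rfl fun i _ => ?_
  rw [h, Matrix.mul_apply, Complex.re_sum, Finset.sum_mul]
  refine Finset.sum_congr rfl fun j _ => ?_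
  rw [mul_diagonal, conjTranspose_apply, mul_right_comm (P.overlap i j), RCLike.star_def,
    Complex.mul_conj, ← Complex.ofReal_mul, Complex.ofReal_re, zero_mul, add_zero]

end SpectralPair

/-! ### Strong subadditivity -/

section Reduction

variable {X Y : Type*} [Fintype X] [DecidableEq X] [Fintype Y] [DecidableEq Y]
  {τ : Matrix (X × Y) (X × Y) ℂ} {σ : Matrix X X ℂ}

/-- The pair `(τ, Tr_Y τ ⊗ 1)`, whose relative entropy is the conditional entropy of `τ` up to
sign. -/
def SpectralPair.ofTraceRight (hτ : τ.PosSemidef) (hσ : traceRight τ = σ)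
    (T : SpectralDecomp τ) (S : SpectralDecomp σ) :
    SpectralPair τ (σ ⊗ₖ (1 : Matrix Y Y ℂ)) where
  state := T
  ref := S.kroneckerOne
  support i j hi := by
    have hN : traceRight τ * S.U.submatrix id (fun _ : Unit => i.1) = 0 := by
      ext x
      rw [hσ]
      have h := congrFun (congrFun S.mul_U_eq x) i.1
      rw [mul_diagonal, show S.d i.1 = 0 from hi, Complex.ofReal_zero, mul_zero] at h
      simpa [Matrix.mul_apply] using h
    have h := congrFun (congrFun (mul_kronecker_one_eq_zero hτ hN) j) ((), i.2)
    rw [Matrix.mul_apply, Matrix.zero_apply] at h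
    rw [Matrix.mul_apply, ← star_eq_zero, star_sum, ← h]
    refine Finset.sum_congr rfl fun k _ => ?_
    rw [star_mul', ← conjTranspose_apply τ, hτ.1.eq, mul_comm]
    simp [SpectralDecomp.kroneckerOne]

lemma SpectralPair.potential_zero_ofTraceRight (hτ : τ.PosSemidef) (hσ : traceRight τ = σ)
    (T : SpectralDecomp τ) (S : SpectralDecomp σ) :
    (SpectralPair.ofTraceRight hτ hσ T S).potential 0 = -entropy σ := by
  have hdiag (x : X) : ∑ y, (((S.U ⊗ₖ (1 : Matrix Y Y ℂ))ᴴ * τ * (S.U ⊗ₖ (1 : Matrix Y Y ℂ)))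
      (x, y) (x, y)).re = S.d x := by
    have h := traceRight_kronecker_mul_mul_kronecker S.Uᴴ S.U τ
    rw [hσ, Matrix.mul_assoc S.Uᴴ, S.mul_U_eq, ← Matrix.mul_assoc, S.conjTranspose_mul_self,
      Matrix.one_mul] at h
    have hx := congrArg Complex.re (congrFun (congrFun h x) x)
    rw [diagonal_apply_eq, Complex.ofReal_re] at hx
    rw [← hx, conjTranspose_kronecker, conjTranspose_one]
    simp [traceRight]
  rw [SpectralPair.potential_zero, Fintype.sum_prod_type, S.entropy_eq, ← Finset.sum_neg_distrib]
  refine Finset.sum_congr rfl fun x _ => ?_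
  rw [Real.negMulLog, ← hdiag, neg_mul, neg_neg, Finset.sum_mul]
  conv_rhs => rw [hdiag]
  rfl

end Reduction

section StrongSubadditivity

variable {A B C : Type*} [Fintype A] [Fintype B] [DecidableEq B] [Fintype C]

lemma resolventForm_ampMiddle (τ θ : Matrix ((A × B) × C) ((A × B) × C) ℂ) (t : ℝ)
    (K : Matrix (A × C) (A × C) ℂ) :
    resolventForm τ θ t (ampMiddle B K) =
      resolventForm (traceMiddle τ) (traceMiddle θ) t K := by
  rw [resolventForm, conjTranspose_ampMiddle, trace_ampMiddle_mul,
    Matrix.trace_mul_comm _ (ampMiddle B Kᴴ), Matrix.trace_mul_comm _ (ampMiddle B K),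
    ← Matrix.mul_assoc, ← Matrix.mul_assoc, ← ampMiddle_mul, ← ampMiddle_mul,
    trace_ampMiddle_mul, trace_ampMiddle_mul, resolventForm, Matrix.trace_mul_comm _ Kᴴ,
    Matrix.trace_mul_comm _ K, Matrix.mul_assoc, Matrix.mul_assoc]

variable [DecidableEq A] [DecidableEq C] {τ θ : Matrix ((A × B) × C) ((A × B) × C) ℂ}
  {φ : Matrix (A × C) (A × C) ℂ} (P : SpectralPair τ θ) (R : SpectralPair (traceMiddle τ) φ)

lemma resolventForm_ampMiddle_relMod (hφ : traceMiddle θ = φ) {t : ℝ} (ht : 0 ≤ t) :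
    resolventForm τ θ t (ampMiddle B (R.relMod (resolventFun t))) = R.resolventMax t := by
  rw [resolventForm_ampMiddle, hφ, R.resolventForm_relMod ht]

lemma hasDerivAt_potential_sub {t : ℝ} (ht : 0 < t) :
    HasDerivAt (fun t => P.potential t - R.potential t) (P.resolventMax t - R.resolventMax t) t :=
  (P.hasDerivAt_potential ht).sub (R.hasDerivAt_potential ht)

lemma monotoneOn_potential_sub (hφ : traceMiddle θ = φ) :
    MonotoneOn (fun t => P.potential t - R.potential t) (Set.Ici 0) := by
  refine monotoneOn_of_deriv_nonneg (convex_Ici 0)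
    (P.continuousOn_potential.sub R.continuousOn_potential) ?_ ?_ <;> rw [interior_Ici]
  · exact fun t ht => (hasDerivAt_potential_sub P R ht).differentiableAt.differentiableWithinAt
  · intro t (ht : 0 < t)
    rw [(hasDerivAt_potential_sub P R ht).deriv, sub_nonneg,
      ← resolventForm_ampMiddle_relMod R hφ ht.le]
    exact P.resolventForm_le ht.le _

lemma tendsto_potential_sub :
    Filter.Tendsto (fun t => P.potential t - R.potential t) Filter.atTop
      (nhds (entropy (traceMiddle τ) - entropy τ)) := by
  have htrace : (traceMiddle τ).trace = τ.trace := by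
    rw [← trace_traceRight, traceRight_traceMiddle, trace_traceRight, trace_traceRight]
  have h := P.tendsto_potential.sub R.tendsto_potential
  simp only [htrace, sub_sub_sub_cancel_right] at h
  rwa [neg_sub_neg] at h

lemma potential_sub_le (hφ : traceMiddle θ = φ) {t : ℝ} (ht : 0 ≤ t) :
    P.potential t - R.potential t ≤ entropy (traceMiddle τ) - entropy τ := by
  refine ge_of_tendsto (tendsto_potential_sub P R) ?_
  filter_upwards [Filter.eventually_ge_atTop t] with u hu
  exact monotoneOn_potential_sub P R hφ ht (ht.trans hu) hu

lemma resolventMax_eq_of_potential_sub_eq (hφ : traceMiddle θ = φ)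
    (heq : P.potential 0 - R.potential 0 = entropy (traceMiddle τ) - entropy τ)
    {t : ℝ} (ht : 0 < t) : R.resolventMax t = P.resolventMax t := by
  have hconst (u : ℝ) (hu : 0 ≤ u) :
      P.potential u - R.potential u = entropy (traceMiddle τ) - entropy τ :=
    le_antisymm (potential_sub_le P R hφ hu)
      (heq ▸ monotoneOn_potential_sub P R hφ (Set.mem_Ici.2 le_rfl) hu hu)
  have hderiv : HasDerivAt (fun t => P.potential t - R.potential t) 0 t := by
    refine (hasDerivAt_const t (entropy (traceMiddle τ) - entropy τ)).congr_of_eventuallyEq ?_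
    filter_upwards [lt_mem_nhds ht] with u hu using hconst u hu.le
  exact (sub_eq_zero.1 ((hasDerivAt_potential_sub P R ht).unique hderiv)).symm

theorem strong_subadditivity (hτ : τ.PosSemidef) :
    entropy τ + entropy (traceRight (traceRight τ)) ≤
      entropy (traceRight τ) + entropy (traceMiddle τ) := by
  have hμ := posSemidef_traceMiddle hτ
  obtain ⟨T⟩ := SpectralDecomp.nonempty_of_posSemidef hτ
  obtain ⟨S⟩ := SpectralDecomp.nonempty_of_posSemidef (posSemidef_traceRight hτ)
  obtain ⟨T'⟩ := SpectralDecomp.nonempty_of_posSemidef hμ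
  obtain ⟨S'⟩ := SpectralDecomp.nonempty_of_posSemidef (posSemidef_traceRight hμ)
  have h := potential_sub_le (SpectralPair.ofTraceRight hτ rfl T S)
    (SpectralPair.ofTraceRight hμ rfl T' S') (traceMiddle_traceRight_kronecker_one τ) le_rfl
  rw [SpectralPair.potential_zero_ofTraceRight, SpectralPair.potential_zero_ofTraceRight,
    traceRight_traceMiddle] at h
  linarith

end StrongSubadditivity

/-! ### The equality case of strong subadditivity -/

/-- `A ⊗ B ⊗ C` is in a quantum Markov state: `I(B;C|A) = 0`, which is the equality case of strong
subadditivity. -/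
def IsMarkov {A B C : Type*} [Fintype A] [DecidableEq A] [Fintype B] [DecidableEq B]
    [Fintype C] [DecidableEq C] (τ : Matrix ((A × B) × C) ((A × B) × C) ℂ) : Prop :=
  entropy τ + entropy (traceRight (traceRight τ)) =
    entropy (traceRight τ) + entropy (traceMiddle τ)

lemma exists_eq_sum_mul_resolventFun (S : Finset ℝ) (hS : ∀ x ∈ S, 0 ≤ x) {f : ℝ → ℝ}
    (hf : f 0 = 0) :
    ∃ c : ℝ → ℝ, ∀ x ∈ S, f x = ∑ t ∈ S with 0 < t, c t * resolventFun t x := by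
  set s := S.filter fun t => 0 < t
  have hs (t) (ht : t ∈ s) : 0 < t := (Finset.mem_filter.1 ht).2
  set v : ℝ → ℝ := fun t => -t⁻¹
  have hv : Set.InjOn v s := fun _ _ _ _ h => inv_injective (neg_injective h)
  let r (x : ℝ) : ℝ := (Lagrange.nodal s v).eval x * (f x / x)
  set g := Lagrange.interpolate s id r
  have hg := Lagrange.eq_interpolate hv
    (Lagrange.degree_interpolate_lt _ (Set.injOn_id _) : g.degree < _)
  refine ⟨fun t => t * (Lagrange.nodalWeight s v t * g.eval (v t)), fun x hx => ?_⟩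
  rcases (hS x hx).eq_or_lt with rfl | hx0
  · simp [hf, resolventFun]
  have hxv (t) (ht : t ∈ s) : x ≠ v t :=
    (hx0.trans' (neg_neg_iff_pos.2 (inv_pos.2 (hs t ht)))).ne'
  have hnodal : (Lagrange.nodal s v).eval x ≠ 0 := by
    simpa [Lagrange.eval_nodal, Finset.prod_ne_zero_iff, sub_eq_zero] using hxv
  have hsum : f x / x = ∑ t ∈ s, Lagrange.nodalWeight s v t * (x - v t)⁻¹ * g.eval (v t) := by
    refine mul_left_cancel₀ hnodal ?_
    rw [← Lagrange.eval_interpolate_not_at_node _ hxv, ← hg]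
    exact (Lagrange.eval_interpolate_at_node r (Set.injOn_id _)
      (Finset.mem_filter.2 ⟨hx, hx0⟩ : x ∈ s)).symm
  rw [div_eq_iff hx0.ne'] at hsum
  rw [hsum, Finset.sum_mul]
  refine Finset.sum_congr rfl fun t ht => ?_
  have := hs t ht
  rw [resolventFun, show x - v t = (1 + t * x) / t by simp only [v]; field_simp; ring]
  field_simp

namespace SpectralPair

variable {n : Type*} [Fintype n] [DecidableEq n] {τ θ : Matrix n n ℂ} (P : SpectralPair τ θ)

/-- The eigenvalues of the relative modular operator. -/
noncomputable def ratios : Finset ℝ :=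
  Finset.univ.image fun p : n × n => P.state.d p.2 / P.ref.d p.1

lemma div_mem_ratios (i j : n) : P.state.d j / P.ref.d i ∈ P.ratios :=
  Finset.mem_image.2 ⟨(i, j), Finset.mem_univ _, rfl⟩

lemma nonneg_of_mem_ratios {x : ℝ} (hx : x ∈ P.ratios) : 0 ≤ x := by
  obtain ⟨p, -, rfl⟩ := Finset.mem_image.1 hx
  exact div_nonneg (P.state.nonneg _) (P.ref.nonneg _)

lemma coords_sum_smul (s : Finset ℝ) (c : ℝ → ℂ) (Y : ℝ → Matrix n n ℂ) (i j : n) :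
    P.coords (∑ t ∈ s, c t • Y t) i j = ∑ t ∈ s, c t * P.coords (Y t) i j := by
  simp only [coords, Matrix.mul_sum, Matrix.sum_mul, Matrix.mul_smul, Matrix.smul_mul,
    Matrix.sum_apply, Matrix.smul_apply, smul_eq_mul]

lemma relMod_eq_sum {f : ℝ → ℝ} {s : Finset ℝ} {c : ℝ → ℝ} {g : ℝ → ℝ → ℝ}
    (hf : ∀ x ∈ P.ratios, f x = ∑ t ∈ s, c t * g t x) :
    P.relMod f = ∑ t ∈ s, (c t : ℂ) • P.relMod (g t) := by
  refine P.coords_injective (Matrix.ext fun i j => ?_)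
  simp only [coords_sum_smul, coords_relMod, hf _ (P.div_mem_ratios i j), Complex.ofReal_sum,
    Complex.ofReal_mul, Finset.mul_sum]
  exact Finset.sum_congr rfl fun t _ => mul_left_comm _ _ _

lemma conjTranspose_relMod_mul_eq_zero {f : ℝ → ℝ} (hf : f 0 = 0) {m : Type*} {N : Matrix n m ℂ}
    (hN : θ * N = 0) : (P.relMod f)ᴴ * N = 0 := by
  have hUN (i k) : P.ref.d i * (P.ref.Uᴴ * N) i k = 0 := by
    have h := congrArg (P.ref.Uᴴ * ·) hN
    simp only [← Matrix.mul_assoc, P.ref.conjTranspose_mul_eq, Matrix.mul_zero] at h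
    rw [Matrix.mul_assoc] at h
    simpa only [Matrix.diagonal_mul, Matrix.zero_apply] using congrFun (congrFun h i) k
  rw [relMod, conjTranspose_mul, conjTranspose_mul, Matrix.mul_assoc, Matrix.mul_assoc]
  suffices h : (of fun i j => P.overlap i j * (f (P.state.d j / P.ref.d i) : ℂ))ᴴ *
      (P.ref.Uᴴ * N) = 0 by rw [h, Matrix.mul_zero]
  ext j k
  rw [Matrix.mul_apply, Matrix.zero_apply]
  refine Finset.sum_eq_zero fun i _ => ?_
  rcases mul_eq_zero.1 (hUN i k) with h | h
  · simp [Complex.ofReal_eq_zero.1 h, hf]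
  · rw [h, mul_zero]

end SpectralPair

section EqualityCase

variable {A B C : Type*} [Fintype A] [DecidableEq A] [Fintype B] [DecidableEq B] [Fintype C]
  [DecidableEq C] {τ θ : Matrix ((A × B) × C) ((A × B) × C) ℂ} {φ : Matrix (A × C) (A × C) ℂ}

lemma coords_ampMiddle_relMod {P : SpectralPair τ θ} {R : SpectralPair (traceMiddle τ) φ}
    (hφ : traceMiddle θ = φ) (hmax : ∀ t, 0 < t → R.resolventMax t = P.resolventMax t)
    {f : ℝ → ℝ} (hf : f 0 = 0) {i j : (A × B) × C} (hij : 0 < P.ref.d i ∨ 0 < P.state.d j) :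
    P.coords (ampMiddle B (R.relMod f)) i j = P.overlap i j * f (P.state.d j / P.ref.d i) := by
  obtain ⟨c, hc⟩ := exists_eq_sum_mul_resolventFun (P.ratios ∪ R.ratios)
    (fun x hx => (Finset.mem_union.1 hx).elim P.nonneg_of_mem_ratios R.nonneg_of_mem_ratios) hf
  rw [R.relMod_eq_sum fun x hx => hc x (Finset.mem_union_right _ hx), ampMiddle_sum_smul,
    hc _ (Finset.mem_union_left _ (P.div_mem_ratios i j))]
  simp only [P.coords_sum_smul, Complex.ofReal_sum, Complex.ofReal_mul, Finset.mul_sum]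
  refine Finset.sum_congr rfl fun t ht => ?_
  have ht0 : 0 < t := (Finset.mem_filter.1 ht).2
  rw [P.coords_eq_of_resolventForm_eq ht0
    ((resolventForm_ampMiddle_relMod R hφ ht0.le).trans (hmax t ht0)) hij, mul_left_comm]

lemma mul_ampMiddle_relMod_sqrt {P : SpectralPair τ θ} {R : SpectralPair (traceMiddle τ) φ}
    (hφ : traceMiddle θ = φ) (hmax : ∀ t, 0 < t → R.resolventMax t = P.resolventMax t)
    {Q w : Matrix ((A × B) × C) ((A × B) × C) ℂ}
    (hQ : P.ref.Uᴴ * Q = diagonal (fun i => (√(P.ref.d i) : ℂ)) * P.ref.Uᴴ)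
    (hw : w * P.state.U = P.state.U * diagonal (fun j => (√(P.state.d j) : ℂ))) :
    Q * ampMiddle B (R.relMod Real.sqrt) = w := by
  refine P.coords_injective (Matrix.ext fun i j => ?_)
  have hcoords : P.coords w i j = P.overlap i j * √(P.state.d j) := by
    rw [← Matrix.one_mul w, P.coords_mul_right hw, SpectralPair.coords, Matrix.mul_one,
      SpectralPair.overlap]
  rw [P.coords_mul_left hQ, hcoords]
  rcases (P.ref.nonneg i).eq_or_lt with hr | hr
  · have h : P.overlap i j * √(P.state.d j) = 0 := by
      rcases mul_eq_zero.1 (P.overlap_mul_eq_zero hr.symm j) with h | h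
      · rw [h, zero_mul]
      · rw [Complex.ofReal_eq_zero.1 h, Real.sqrt_zero, Complex.ofReal_zero, mul_zero]
    rw [h, ← hr, Real.sqrt_zero, Complex.ofReal_zero, zero_mul]
  · rw [coords_ampMiddle_relMod hφ hmax Real.sqrt_zero (Or.inl hr), mul_left_comm,
      ← Complex.ofReal_mul, Real.sqrt_div' _ hr.le, mul_div_cancel₀ _ (Real.sqrt_pos.2 hr).ne']

lemma ampMiddle_relMod_sqrt_mul {P : SpectralPair τ θ} {R : SpectralPair (traceMiddle τ) φ}
    (hφ : traceMiddle θ = φ) (hmax : ∀ t, 0 < t → R.resolventMax t = P.resolventMax t)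
    {Q w : Matrix ((A × B) × C) ((A × B) × C) ℂ}
    (hQ : P.ref.Uᴴ * Q = diagonal (fun i => (√(P.ref.d i) : ℂ)) * P.ref.Uᴴ)
    (hw : w * P.state.U = P.state.U * diagonal (fun j => (√(P.state.d j) : ℂ))) :
    ampMiddle B (R.relMod Real.sqrt) * w = Q * ampMiddle B (R.relMod id) := by
  refine P.coords_injective (Matrix.ext fun i j => ?_)
  rw [P.coords_mul_right hw, P.coords_mul_left hQ]
  rcases (P.state.nonneg j).eq_or_lt with hs | hs
  · rcases (P.ref.nonneg i).eq_or_lt with hr | hr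
    · simp [← hs, ← hr]
    · rw [coords_ampMiddle_relMod hφ hmax (f := id) rfl (Or.inl hr)]
      simp [← hs]
  · rw [coords_ampMiddle_relMod hφ hmax Real.sqrt_zero (Or.inr hs),
      coords_ampMiddle_relMod hφ hmax rfl (Or.inr hs), mul_assoc,
      mul_left_comm (√(P.ref.d i) : ℂ), ← Complex.ofReal_mul, ← Complex.ofReal_mul]
    congr 2
    rcases (P.ref.nonneg i).eq_or_lt with hr | hr
    · simp [← hr]
    · rw [Real.sqrt_div' _ hr.le, id_eq, div_mul_eq_mul_div, Real.mul_self_sqrt hs.le,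
        div_eq_iff (Real.sqrt_pos.2 hr).ne', mul_right_comm, Real.mul_self_sqrt hr.le,
        mul_div_cancel₀ _ hr.ne']

lemma exists_spectralPair_root {σ q : Matrix (A × B) (A × B) ℂ} (hτ : τ.PosSemidef)
    (hσ : traceRight τ = σ) (hq : q.PosSemidef) (hqq : q * q = σ) :
    ∃ (w : Matrix ((A × B) × C) ((A × B) × C) ℂ) (P : SpectralPair τ (σ ⊗ₖ (1 : Matrix C C ℂ))),
      w.IsHermitian ∧ w * w = τ ∧ P.potential 0 = -entropy σ ∧
      P.ref.Uᴴ * (q ⊗ₖ (1 : Matrix C C ℂ)) =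
        diagonal (fun i => (√(P.ref.d i) : ℂ)) * P.ref.Uᴴ ∧
      w * P.state.U = P.state.U * diagonal (fun j => (√(P.state.d j) : ℂ)) := by
  obtain ⟨w, hw, rfl⟩ := exists_posSemidef_mul_self_eq hτ
  obtain ⟨W⟩ := SpectralDecomp.nonempty_of_posSemidef hw
  obtain ⟨S⟩ := SpectralDecomp.nonempty_of_posSemidef hq
  subst hqq
  refine ⟨w, SpectralPair.ofTraceRight hτ hσ W.sq S.sq, hw.1, rfl,
    SpectralPair.potential_zero_ofTraceRight _ _ _ _, ?_, ?_⟩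
  · have hd (i : (A × B) × C) : √(S.sq.kroneckerOne.d i) = S.d i.1 :=
      Real.sqrt_mul_self (S.nonneg _)
    simp only [SpectralPair.ofTraceRight, hd]
    exact S.kroneckerOne.conjTranspose_mul_eq
  · have hd (j : (A × B) × C) : √(W.sq.d j) = W.d j := Real.sqrt_mul_self (W.nonneg _)
    simp only [SpectralPair.ofTraceRight, hd]
    exact W.mul_U_eq

theorem IsMarkov.exists_sandwich {q : Matrix (A × B) (A × B) ℂ}
    (hM : IsMarkov τ) (hτ : τ.PosSemidef) (hq : q.PosSemidef)
    (hqq : q * q = traceRight τ) :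
    ∃ T K : Matrix (A × C) (A × C) ℂ, T.IsHermitian ∧
      (q ⊗ₖ (1 : Matrix C C ℂ)) * ampMiddle B T * (q ⊗ₖ (1 : Matrix C C ℂ)) = τ ∧
      ampMiddle B T * (q ⊗ₖ (1 : Matrix C C ℂ)) = (q ⊗ₖ (1 : Matrix C C ℂ)) * ampMiddle B K ∧
      ∀ N : Matrix A A ℂ, traceRight (traceRight τ) * N = 0 →
        T * (N ⊗ₖ (1 : Matrix C C ℂ)) = 0 := by
  obtain ⟨w, P, hw, hww, hP, hQ, hW⟩ := exists_spectralPair_root hτ rfl hq hqq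
  have hμ := posSemidef_traceMiddle hτ
  obtain ⟨T⟩ := SpectralDecomp.nonempty_of_posSemidef hμ
  obtain ⟨S⟩ := SpectralDecomp.nonempty_of_posSemidef (posSemidef_traceRight hμ)
  set R := SpectralPair.ofTraceRight hμ rfl T S
  have hφ := traceMiddle_traceRight_kronecker_one τ
  have hmax (t : ℝ) : 0 < t → R.resolventMax t = P.resolventMax t := by
    refine resolventMax_eq_of_potential_sub_eq P R hφ ?_
    rw [hP, SpectralPair.potential_zero_ofTraceRight, traceRight_traceMiddle]
    linarith [show _ = _ from hM]
  have hroot := mul_ampMiddle_relMod_sqrt hφ hmax hQ hW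
  have hroot' : ampMiddle B (R.relMod Real.sqrt)ᴴ * (q ⊗ₖ (1 : Matrix C C ℂ)) = w := by
    simpa only [conjTranspose_mul, conjTranspose_kronecker, conjTranspose_one, hw.eq, hq.1.eq,
      conjTranspose_ampMiddle] using congrArg conjTranspose hroot
  refine ⟨R.relMod Real.sqrt * (R.relMod Real.sqrt)ᴴ, R.relMod id,
    isHermitian_mul_conjTranspose_self _, ?_, ?_, fun N hN => ?_⟩
  · rw [ampMiddle_mul, Matrix.mul_assoc, Matrix.mul_assoc, hroot', ← Matrix.mul_assoc, hroot, hww]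
  · rw [ampMiddle_mul, Matrix.mul_assoc, hroot', ampMiddle_relMod_sqrt_mul hφ hmax hQ hW]
  · rw [Matrix.mul_assoc, R.conjTranspose_relMod_mul_eq_zero Real.sqrt_zero, Matrix.mul_zero]
    rw [← mul_kronecker_mul, traceRight_traceMiddle, hN, zero_kronecker]

end EqualityCase

/-! ### States that are Markov in two ways -/

/-- The `(i, j)` block, an operator on `X`, of an operator on `X ⊗ Y`. -/
def block {X Y : Type*} (M : Matrix (X × Y) (X × Y) ℂ) (i j : Y) : Matrix X X ℂ :=
  of fun x x' => M (x, i) (x', j)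

section Block

variable {A B X Y : Type*}

lemma kronecker_one_submatrix_prodComm [DecidableEq A] (K : Matrix B B ℂ) :
    (K ⊗ₖ (1 : Matrix A A ℂ)).submatrix (Equiv.prodComm A B) (Equiv.prodComm A B) =
      (1 : Matrix A A ℂ) ⊗ₖ K := by
  ext p q
  exact mul_comm _ _

lemma conjTranspose_block (M : Matrix (X × Y) (X × Y) ℂ) (i j : Y) :
    (block M i j)ᴴ = block Mᴴ j i :=
  rfl

lemma block_traceMiddle [Fintype B] (M : Matrix ((A × B) × Y) ((A × B) × Y) ℂ) (i j : Y) :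
    block (traceMiddle M) i j = traceRight (block M i j) :=
  rfl

lemma block_ampMiddle [DecidableEq B] (K : Matrix (A × Y) (A × Y) ℂ) (i j : Y) :
    block (ampMiddle B K) i j = block K i j ⊗ₖ (1 : Matrix B B ℂ) := by
  ext p q
  simp [block, ampMiddle, Matrix.one_apply]

variable [Fintype X] [Fintype Y] [DecidableEq Y]

lemma block_kronecker_mul_mul_kronecker {m : Type*} (K : Matrix m X ℂ) (L : Matrix X m ℂ)
    (M : Matrix (X × Y) (X × Y) ℂ) (i j : Y) :
    block ((K ⊗ₖ (1 : Matrix Y Y ℂ)) * M * (L ⊗ₖ (1 : Matrix Y Y ℂ))) i j =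
      K * block M i j * L := by
  ext x x'
  simp [block, Matrix.mul_apply, Fintype.sum_prod_type, Matrix.one_apply]

lemma block_mul_kronecker_one (M : Matrix (X × Y) (X × Y) ℂ) (K : Matrix X X ℂ) (i j : Y) :
    block (M * (K ⊗ₖ (1 : Matrix Y Y ℂ))) i j = block M i j * K := by
  classical
  simpa using block_kronecker_mul_mul_kronecker 1 K M i j

lemma block_kronecker_one_mul (M : Matrix (X × Y) (X × Y) ℂ) (K : Matrix X X ℂ) (i j : Y) :
    block ((K ⊗ₖ (1 : Matrix Y Y ℂ)) * M) i j = K * block M i j := by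
  classical
  simpa using block_kronecker_mul_mul_kronecker K 1 M i j

end Block

/-- The exchange of the first two factors of `A ⊗ B ⊗ C`. -/
def swapLeft (A B C : Type*) : (B × A) × C ≃ (A × B) × C :=
  (Equiv.prodComm B A).prodCongr (Equiv.refl C)

/-- The exchange of the last two factors of `A ⊗ B ⊗ C`. -/
def swapRight (A B C : Type*) : (A × C) × B ≃ (A × B) × C where
  toFun p := ((p.1.1, p.2), p.1.2)
  invFun p := ((p.1.1, p.2), p.1.2)
  left_inv _ := rfl
  right_inv _ := rfl

section Sandwich

variable {n : Type*} [Fintype n] {q s t t' y z z' : Matrix n n ℂ}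

lemma mul_eq_mul_of_sandwich_eq (hq : q.IsHermitian) (hz : t * q = q * z) (hz' : t' * q = q * z')
    (hs : q * t * q = q * t' * q) : t * q = t' * q := by
  have h : qᴴ * q * (z - z') = 0 := by
    rw [hq.eq, Matrix.mul_assoc, Matrix.mul_sub, ← hz, ← hz', Matrix.mul_sub, ← Matrix.mul_assoc,
      ← Matrix.mul_assoc, hs, sub_self]
  rw [conjTranspose_mul_self_mul_eq_zero, Matrix.mul_sub, sub_eq_zero] at h
  rw [hz, hz', h]

lemma mul_mul_eq_mul_mul_of_commute (hs : s * q = q * y) (ht : t * q = t' * q)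
    (hst' : Commute s t') : s * t * q = t * s * q :=
  calc s * t * q = s * t' * q := by rw [Matrix.mul_assoc, ht, Matrix.mul_assoc]
    _ = t' * q * y := by rw [hst'.eq, Matrix.mul_assoc, hs, Matrix.mul_assoc]
    _ = t * s * q := by rw [← ht, Matrix.mul_assoc, ← hs, Matrix.mul_assoc]

lemma commute_of_mul_eq_mul (hq : q.PosSemidef) (hz : t * q = q * z) (hz' : t * q = q * z')
    (hcomm : tᴴ * t * q = t * tᴴ * q) (htz' : Commute tᴴ z') : Commute t q := by
  have hqz : q * z = q * z' := hz.symm.trans hz'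
  have hz_star : zᴴ * q = q * tᴴ := by
    simpa only [conjTranspose_mul, hq.1.eq] using (congrArg conjTranspose hz).symm
  have hswap : q * tᴴ * z = t * q * tᴴ := by
    calc q * tᴴ * z = q * tᴴ * z' := by rw [← hz_star, Matrix.mul_assoc, hqz, Matrix.mul_assoc]
      _ = t * q * tᴴ := by rw [Matrix.mul_assoc, htz'.eq, ← Matrix.mul_assoc, hz']
  have h_trace : ((z - t)ᴴ * q * (z - t)).trace = 0 := by
    have hexp : (z - t)ᴴ * q * (z - t) = t * q * tᴴ - q * tᴴ * t - tᴴ * t * q + tᴴ * q * t := by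
      rw [conjTranspose_sub, Matrix.sub_mul, hz_star, ← hswap, Matrix.mul_assoc tᴴ t q, hz]
      simp only [Matrix.sub_mul, Matrix.mul_sub, Matrix.mul_assoc]
      abel
    have h₁ : (t * q * tᴴ).trace = (tᴴ * t * q).trace := by
      rw [Matrix.trace_mul_comm, Matrix.mul_assoc]
    have h₂ : (q * tᴴ * t).trace = (tᴴ * t * q).trace := by
      rw [Matrix.mul_assoc, Matrix.trace_mul_comm]
    have h₃ : (tᴴ * q * t).trace = (tᴴ * t * q).trace := by
      rw [Matrix.trace_mul_comm, ← Matrix.mul_assoc, hcomm]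
    rw [hexp, trace_add, trace_sub, trace_sub, h₁, h₂, h₃]
    ring
  have h := mul_eq_zero_of_trace_conjTranspose_mul_mul_eq_zero hq h_trace
  rw [Matrix.mul_sub, sub_eq_zero] at h
  exact hz.trans h

lemma commute_of_mul_conjTranspose_eq (hs : s * (s * t)ᴴ = s * (t * s)ᴴ)
    (ht : t * (s * t)ᴴ = t * (t * s)ᴴ) : Commute s t := by
  have hs' : s * (s * t - t * s)ᴴ = 0 := by
    rw [conjTranspose_sub, Matrix.mul_sub, hs, sub_self]
  have ht' : t * (s * t - t * s)ᴴ = 0 := by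
    rw [conjTranspose_sub, Matrix.mul_sub, ht, sub_self]
  have h : (s * t - t * s) * (s * t - t * s)ᴴ = 0 := by
    rw [Matrix.sub_mul, Matrix.mul_assoc, Matrix.mul_assoc, hs', ht', Matrix.mul_zero,
      Matrix.mul_zero, sub_zero]
  exact sub_eq_zero.1 (self_mul_conjTranspose_eq_zero.1 h)

end Sandwich

section CommutingFactors

variable {A B : Type*} [Fintype A] [Fintype B] {q : Matrix (A × B) (A × B) ℂ}

lemma commute_left_of_mul_mul_eq [DecidableEq B] (hq : q.IsHermitian) {s t : Matrix A A ℂ}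
    (h : (s ⊗ₖ (1 : Matrix B B ℂ)) * (t ⊗ₖ 1) * q = (t ⊗ₖ 1) * (s ⊗ₖ 1) * q)
    (hs : ∀ N N', q * (N ⊗ₖ (1 : Matrix B B ℂ)) = q * (N' ⊗ₖ 1) → s * N = s * N')
    (ht : ∀ N N', q * (N ⊗ₖ (1 : Matrix B B ℂ)) = q * (N' ⊗ₖ 1) → t * N = t * N') :
    Commute s t := by
  have h' : q * ((s * t)ᴴ ⊗ₖ (1 : Matrix B B ℂ)) = q * ((t * s)ᴴ ⊗ₖ 1) := by
    simpa only [← mul_kronecker_mul, Matrix.mul_one, conjTranspose_mul, conjTranspose_kronecker,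
      conjTranspose_one, hq.eq] using congrArg conjTranspose h
  exact commute_of_mul_conjTranspose_eq (hs _ _ h') (ht _ _ h')

lemma commute_right_of_mul_mul_eq [DecidableEq A] (hq : q.IsHermitian) {s t : Matrix B B ℂ}
    (h : ((1 : Matrix A A ℂ) ⊗ₖ s) * (1 ⊗ₖ t) * q = (1 ⊗ₖ t) * (1 ⊗ₖ s) * q)
    (hs : ∀ N N', q * ((1 : Matrix A A ℂ) ⊗ₖ N) = q * (1 ⊗ₖ N') → s * N = s * N')
    (ht : ∀ N N', q * ((1 : Matrix A A ℂ) ⊗ₖ N) = q * (1 ⊗ₖ N') → t * N = t * N') :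
    Commute s t := by
  have h' : q * ((1 : Matrix A A ℂ) ⊗ₖ (s * t)ᴴ) = q * (1 ⊗ₖ (t * s)ᴴ) := by
    simpa only [← mul_kronecker_mul, Matrix.mul_one, conjTranspose_mul, conjTranspose_kronecker,
      conjTranspose_one, hq.eq] using congrArg conjTranspose h
  exact commute_of_mul_conjTranspose_eq (hs _ _ h') (ht _ _ h')

end CommutingFactors

section DoublyMarkov

variable {A B C : Type*} [Fintype A] [DecidableEq A] [Fintype B] [DecidableEq B]
  [Fintype C] [DecidableEq C] {τ : Matrix ((A × B) × C) ((A × B) × C) ℂ}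
  {q : Matrix (A × B) (A × B) ℂ}

lemma commute_kronecker_one_one_kronecker (K : Matrix A A ℂ) (L : Matrix B B ℂ) :
    Commute (K ⊗ₖ (1 : Matrix B B ℂ)) ((1 : Matrix A A ℂ) ⊗ₖ L) := by
  rw [Commute, SemiconjBy, ← mul_kronecker_mul, ← mul_kronecker_mul]
  simp only [Matrix.mul_one, Matrix.one_mul]

lemma IsMarkov.exists_blocks_left (hM : IsMarkov τ) (hτ : τ.PosSemidef) (hq : q.PosSemidef)
    (hqq : q * q = traceRight τ) :
    ∃ t z : C → C → Matrix A A ℂ, (∀ i j, (t i j)ᴴ = t j i) ∧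
      (∀ i j, (t i j ⊗ₖ (1 : Matrix B B ℂ)) * q = q * (z i j ⊗ₖ (1 : Matrix B B ℂ))) ∧
      (∀ i j, q * (t i j ⊗ₖ (1 : Matrix B B ℂ)) * q = block τ i j) ∧
      ∀ N N' : Matrix A A ℂ, q * (N ⊗ₖ (1 : Matrix B B ℂ)) = q * (N' ⊗ₖ 1) →
        ∀ i j, t i j * N = t i j * N' := by
  obtain ⟨T, Z, hT, hsandwich, hmove, hker⟩ := hM.exists_sandwich hτ hq hqq
  refine ⟨block T, block Z, fun i j => ?_, fun i j => ?_, fun i j => ?_, fun N N' hN i j => ?_⟩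
  · rw [conjTranspose_block, hT.eq]
  · rw [← block_ampMiddle, ← block_ampMiddle, ← block_mul_kronecker_one,
      ← block_kronecker_one_mul, hmove]
  · rw [← hsandwich, block_mul_kronecker_one, block_kronecker_one_mul, block_ampMiddle]
  · have h : traceRight (traceRight τ) * (N - N') = 0 := by
      rw [Matrix.mul_sub, ← traceRight_mul_kronecker_one (traceRight τ) N,
        ← traceRight_mul_kronecker_one (traceRight τ) N', ← hqq, Matrix.mul_assoc, hN,
        Matrix.mul_assoc, sub_self]
    have hTN : block T i j * (N - N') = 0 := by
      rw [← block_mul_kronecker_one, hker _ h]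
      rfl
    rwa [Matrix.mul_sub, sub_eq_zero] at hTN

lemma IsMarkov.exists_blocks_right (hM : IsMarkov (τ.submatrix (swapLeft A B C) (swapLeft A B C)))
    (hτ : τ.PosSemidef) (hq : q.PosSemidef) (hqq : q * q = traceRight τ) :
    ∃ t z : C → C → Matrix B B ℂ, (∀ i j, (t i j)ᴴ = t j i) ∧
      (∀ i j, ((1 : Matrix A A ℂ) ⊗ₖ t i j) * q = q * ((1 : Matrix A A ℂ) ⊗ₖ z i j)) ∧
      (∀ i j, q * ((1 : Matrix A A ℂ) ⊗ₖ t i j) * q = block τ i j) ∧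
      ∀ N N' : Matrix B B ℂ, q * ((1 : Matrix A A ℂ) ⊗ₖ N) = q * (1 ⊗ₖ N') →
        ∀ i j, t i j * N = t i j * N' := by
  set e := Equiv.prodComm A B
  have hqq' : q.submatrix e.symm e.symm * q.submatrix e.symm e.symm =
      traceRight (τ.submatrix (swapLeft A B C) (swapLeft A B C)) := by
    rw [submatrix_mul_equiv, hqq]
    rfl
  obtain ⟨t, z, ht, hmove, hsandwich, hker⟩ :=
    hM.exists_blocks_left (hτ.submatrix _) (hq.submatrix _) hqq'
  have hswap : (q.submatrix e.symm e.symm).submatrix e e = q := by simp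
  refine ⟨t, z, ht, fun i j => ?_, fun i j => ?_, fun N N' hN => hker N N' ?_⟩
  · rw [← kronecker_one_submatrix_prodComm, ← kronecker_one_submatrix_prodComm, ← hswap,
      submatrix_mul_equiv, submatrix_mul_equiv, hmove]
  · rw [← kronecker_one_submatrix_prodComm, ← hswap, submatrix_mul_equiv, submatrix_mul_equiv,
      hsandwich]
    rfl
  · rw [← kronecker_one_submatrix_prodComm, ← kronecker_one_submatrix_prodComm, ← hswap,
      submatrix_mul_equiv, submatrix_mul_equiv] at hN
    exact (reindex e.symm e.symm).injective hN

theorem exists_commuting_blocks (hA : IsMarkov τ)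
    (hB : IsMarkov (τ.submatrix (swapLeft A B C) (swapLeft A B C))) (hτ : τ.PosSemidef) :
    ∃ (t : C → C → Matrix A A ℂ) (t' : C → C → Matrix B B ℂ),
      (∀ i j, (t i j)ᴴ = t j i) ∧ (∀ i j, (t' i j)ᴴ = t' j i) ∧
      (∀ i j k l, Commute (t i j) (t k l)) ∧ (∀ i j k l, Commute (t' i j) (t' k l)) ∧
      (∀ i j, Commute (t i j ⊗ₖ (1 : Matrix B B ℂ)) (traceRight τ)) ∧
      (∀ i j, ((1 : Matrix A A ℂ) ⊗ₖ t' i j) * traceRight τ =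
        traceRight τ * (t i j ⊗ₖ (1 : Matrix B B ℂ))) ∧
      ∀ i j, block (traceMiddle τ) i j = traceRight (traceRight τ) * t i j := by
  obtain ⟨q, hq, hqq⟩ := exists_posSemidef_mul_self_eq (posSemidef_traceRight hτ)
  obtain ⟨t, z, ht, hz, hsand, hker⟩ := hA.exists_blocks_left hτ hq hqq
  obtain ⟨t', z', ht', hz', hsand', hker'⟩ := hB.exists_blocks_right hτ hq hqq
  have hagree (i j) : (t i j ⊗ₖ 1) * q = (1 ⊗ₖ t' i j) * q :=
    mul_eq_mul_of_sandwich_eq hq.1 (hz i j) (hz' i j) ((hsand i j).trans (hsand' i j).symm)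
  have hcomm (i j k l) := mul_mul_eq_mul_mul_of_commute (hz i j) (hagree k l)
    (commute_kronecker_one_one_kronecker _ _)
  have hcomm' (i j k l) := mul_mul_eq_mul_mul_of_commute (hz' i j) (hagree k l).symm
    (commute_kronecker_one_one_kronecker _ _).symm
  have hstar (i j) : (t i j ⊗ₖ (1 : Matrix B B ℂ))ᴴ = t j i ⊗ₖ 1 := by
    rw [conjTranspose_kronecker, conjTranspose_one, ht]
  have hcommq (i j) : Commute (t i j ⊗ₖ (1 : Matrix B B ℂ)) q := by
    refine commute_of_mul_eq_mul hq (hz i j) ((hagree i j).trans (hz' i j)) ?_ ?_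
    · rw [hstar, hcomm]
    · rw [hstar]
      exact commute_kronecker_one_one_kronecker _ _
  have hcommρ (i j) : Commute (t i j ⊗ₖ (1 : Matrix B B ℂ)) (traceRight τ) :=
    hqq ▸ (hcommq i j).mul_right (hcommq i j)
  refine ⟨t, t', ht, ht', fun i j k l => ?_, fun i j k l => ?_, hcommρ, fun i j => ?_,
    fun i j => ?_⟩
  · exact commute_left_of_mul_mul_eq hq.1 (hcomm i j k l) (hker · · · i j) (hker · · · k l)
  · exact commute_right_of_mul_mul_eq hq.1 (hcomm' i j k l) (hker' · · · i j) (hker' · · · k l)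
  · rw [← (hcommρ i j).eq, ← hqq, ← Matrix.mul_assoc, ← hagree, Matrix.mul_assoc]
  · rw [block_traceMiddle, ← hsand, Matrix.mul_assoc, (hcommq i j).eq, ← Matrix.mul_assoc, hqq,
      traceRight_mul_kronecker_one]

end DoublyMarkov

/-! ### Projective measurements and the joint spectral theorem -/

/-- A projective measurement with outcomes in `J`: mutually orthogonal projections summing to the
identity. -/
structure IsPVM {J n : Type*} [Fintype J] [Fintype n] [DecidableEq n] (P : J → Matrix n n ℂ) :
    Prop where
  isHermitian : ∀ j, (P j).IsHermitian
  mul_self : ∀ j, P j * P j = P j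
  mul_eq_zero : ∀ j k, j ≠ k → P j * P k = 0
  sum_eq_one : ∑ j, P j = 1

section PVM

variable {J n : Type*} [Fintype J] [Fintype n] [DecidableEq n]

lemma isPVM_fibers [DecidableEq J] (f : n → J) :
    IsPVM fun j => diagonal fun a => if f a = j then (1 : ℂ) else 0 where
  isHermitian j := isHermitian_diagonal_iff.2 fun a => by split_ifs <;> simp
  mul_self j := by
    simp only [diagonal_mul_diagonal, ← ite_and, mul_ite, mul_one, mul_zero, and_self]
  mul_eq_zero j k hjk := by
    simp only [diagonal_mul_diagonal, ← diagonal_zero, diagonal_injective.eq_iff]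
    ext a
    grind
  sum_eq_one := by
    ext a b
    by_cases hab : a = b <;> simp [Matrix.sum_apply, Matrix.one_apply, hab]

lemma IsPVM.conj {P : J → Matrix n n ℂ} (hP : IsPVM P) {U : Matrix n n ℂ} (hU : Uᴴ * U = 1) :
    IsPVM fun j => U * P j * Uᴴ := by
  have hmul (j k) : U * P j * Uᴴ * (U * P k * Uᴴ) = U * (P j * P k) * Uᴴ := by
    simp only [Matrix.mul_assoc, ← Matrix.mul_assoc Uᴴ U, hU, Matrix.one_mul]
  refine ⟨fun j => isHermitian_mul_mul_conjTranspose U (hP.isHermitian j), fun j => ?_,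
    fun j k hjk => ?_, ?_⟩
  · rw [hmul, hP.mul_self]
  · rw [hmul, hP.mul_eq_zero j k hjk, Matrix.mul_zero, Matrix.zero_mul]
  · rw [← Matrix.sum_mul, ← Matrix.mul_sum, hP.sum_eq_one, Matrix.mul_one, mul_eq_one_comm.1 hU]

end PVM

section SumKronecker

variable {ι l m n p : Type*}

lemma sum_kronecker (s : Finset ι) (K : ι → Matrix l m ℂ) (L : Matrix n p ℂ) :
    (∑ i ∈ s, K i) ⊗ₖ L = ∑ i ∈ s, K i ⊗ₖ L :=
  map_sum ((kroneckerBilinear (R := ℂ)).flip L) K s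

lemma kronecker_sum (s : Finset ι) (K : Matrix l m ℂ) (L : ι → Matrix n p ℂ) :
    K ⊗ₖ (∑ i ∈ s, L i) = ∑ i ∈ s, K ⊗ₖ L i :=
  map_sum (kroneckerBilinear (R := ℂ) K) L s

end SumKronecker

section JointSpectral

variable {ι n : Type*} [Fintype n] [DecidableEq n] {T : ι → Matrix n n ℂ}

lemma exists_orthonormalBasis_of_isHermitian (hT : ∀ i, (T i).IsHermitian)
    (hcomm : ∀ i j, Commute (T i) (T j)) :
    ∃ (b : OrthonormalBasis n ℂ (EuclideanSpace ℂ n)) (χ : n → ι → ℂ),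
      ∀ a i, toEuclideanLin (T i) (b a) = χ a i • b a := by
  classical
  let L (i : ι) : Module.End ℂ (EuclideanSpace ℂ n) := toEuclideanLin (T i)
  have hL (i) : (L i).IsSymmetric := isSymmetric_toEuclideanLin_iff.2 (hT i)
  have hLcomm : Pairwise (Function.onFun Commute L) := fun i j _ => by
    ext x
    simp [L, toEuclideanLin, mulVec_mulVec, (hcomm i j).eq]
  have hinternal := LinearMap.IsSymmetric.directSum_isInternal_of_pairwise_commute hL hLcomm
  let v (χ : ι → ℂ) := (stdOrthonormalBasis ℂ
    (⨅ i, Module.End.eigenspace (L i) (χ i) : Submodule ℂ (EuclideanSpace ℂ n))).toBasis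
  let b := hinternal.collectedBasis v
  have hb : Orthonormal ℂ b := hinternal.collectedBasis_orthonormal
    (LinearMap.IsSymmetric.orthogonalFamily_iInf_eigenspaces hL) fun χ => by simp [v]
  have := FiniteDimensional.fintypeBasisIndex b
  let e := Fintype.equivOfCardEq
    (finrank_euclideanSpace.symm.trans (Module.finrank_eq_card_basis b))
  refine ⟨(b.toOrthonormalBasis hb).reindex e.symm, fun a => (e a).1, fun a i => ?_⟩
  have hmem := hinternal.collectedBasis_mem v (e a)
  rw [Submodule.mem_iInf] at hmem
  simpa [b] using Module.End.mem_eigenspace_iff.1 (hmem i)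

lemma exists_unitary_diagonal_of_isHermitian (hT : ∀ i, (T i).IsHermitian)
    (hcomm : ∀ i j, Commute (T i) (T j)) :
    ∃ (U : Matrix n n ℂ) (χ : n → ι → ℂ), Uᴴ * U = 1 ∧
      ∀ i, T i = U * diagonal (fun a => χ a i) * Uᴴ := by
  obtain ⟨b, χ, hb⟩ := exists_orthonormalBasis_of_isHermitian hT hcomm
  let U : Matrix n n ℂ := of fun x a => b a x
  have hU : Uᴴ * U = 1 := by
    ext a a'
    rw [Matrix.one_apply, ← orthonormal_iff_ite.1 b.orthonormal a a']
    simp [U, Matrix.mul_apply, PiLp.inner_apply, mul_comm]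
  have hTU (i) : T i * U = U * diagonal (fun a => χ a i) := by
    ext x a
    rw [mul_diagonal]
    simpa [toEuclideanLin, mulVec, dotProduct, U, Matrix.mul_apply, mul_comm]
      using congrArg (fun w => w x) (hb a i)
  exact ⟨U, χ, hU, fun i => by rw [← hTU, Matrix.mul_assoc, mul_eq_one_comm.1 hU, Matrix.mul_one]⟩

open scoped ComplexStarModule in
lemma exists_unitary_diagonal_of_commute (hcomm : ∀ i j, Commute (T i) (T j))
    (hstar : ∀ i j, Commute (T i) (T j)ᴴ) :
    ∃ (U : Matrix n n ℂ) (χ : n → ι → ℂ), Uᴴ * U = 1 ∧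
      ∀ i, T i = U * diagonal (fun a => χ a i) * Uᴴ := by
  let H : Bool × ι → selfAdjoint (Matrix n n ℂ) := fun p => cond p.1 (ℜ (T p.2)) (ℑ (T p.2))
  have hpart {X : Matrix n n ℂ} (h : ∀ j, Commute X (T j)) (h' : ∀ j, Commute X (T j)ᴴ) (p) :
      Commute X (H p) := by
    obtain ⟨_ | _, j⟩ := p
    · simp only [H, cond_false, imaginaryPart_apply_coe]
      exact (((h j).sub_right (h' j)).smul_right _).smul_right _
    · simp only [H, cond_true, realPart_apply_coe]
      exact ((h j).add_right (h' j)).smul_right _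
  have hH (p q) : Commute (H p : Matrix n n ℂ) (H q) :=
    hpart (fun j => (hpart (hcomm j) (hstar j) p).symm)
      (fun j => (hpart (fun i => (hstar i j).symm) (fun i => (hcomm j i).star_star) p).symm) q
  obtain ⟨U, χ, hU, hχ⟩ := exists_unitary_diagonal_of_isHermitian (fun p => (H p).2) hH
  refine ⟨U, fun a i => χ a (true, i) + Complex.I * χ a (false, i), hU, fun i => ?_⟩
  conv_lhs => rw [← realPart_add_I_smul_imaginaryPart (T i)]
  change (H (true, i) : Matrix n n ℂ) + Complex.I • (H (false, i) : Matrix n n ℂ) = _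
  rw [hχ, hχ, ← Matrix.smul_mul, ← Matrix.mul_smul, ← Matrix.add_mul, ← Matrix.mul_add,
    ← diagonal_smul, diagonal_add]
  rfl

theorem exists_isPVM_of_commute (hcomm : ∀ i j, Commute (T i) (T j))
    (hstar : ∀ i j, Commute (T i) (T j)ᴴ) :
    ∃ S₀ : Finset (ι → ℂ), ∀ S : Finset (ι → ℂ), S₀ ⊆ S →
      ∃ P : S → Matrix n n ℂ, IsPVM P ∧ ∀ i, T i = ∑ χ : S, χ.1 i • P χ := by
  classical
  obtain ⟨U, α, hU, hT⟩ := exists_unitary_diagonal_of_commute hcomm hstar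
  refine ⟨Finset.univ.image α, fun S hS => ?_⟩
  have hmem (a) : α a ∈ S := hS (Finset.mem_image_of_mem α (Finset.mem_univ a))
  let f (a : n) : S := ⟨α a, hmem a⟩
  refine ⟨_, (isPVM_fibers f).conj hU, fun i => ?_⟩
  have h : ∑ χ : S, χ.1 i • diagonal (fun a => if f a = χ then (1 : ℂ) else 0) =
      diagonal (fun a => α a i) := by
    ext a b
    by_cases hab : a = b <;> simp [f, Matrix.sum_apply, hab]
  rw [hT, ← h, Matrix.mul_sum, Matrix.sum_mul]
  simp only [Matrix.mul_smul, Matrix.smul_mul]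

lemma exists_isPVM_pair_of_commute {m : Type*} [Fintype m] [DecidableEq m]
    {T' : ι → Matrix m m ℂ} (hcomm : ∀ i j, Commute (T i) (T j))
    (hstar : ∀ i j, Commute (T i) (T j)ᴴ) (hcomm' : ∀ i j, Commute (T' i) (T' j))
    (hstar' : ∀ i j, Commute (T' i) (T' j)ᴴ) :
    ∃ (S : Finset (ι → ℂ)) (P : S → Matrix n n ℂ) (Q : S → Matrix m m ℂ), IsPVM P ∧ IsPVM Q ∧
      (∀ i, T i = ∑ χ : S, χ.1 i • P χ) ∧ ∀ i, T' i = ∑ χ : S, χ.1 i • Q χ := by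
  classical
  obtain ⟨S, hS⟩ := exists_isPVM_of_commute hcomm hstar
  obtain ⟨S', hS'⟩ := exists_isPVM_of_commute hcomm' hstar'
  obtain ⟨P, hP, hTP⟩ := hS (S ∪ S') Finset.subset_union_left
  obtain ⟨Q, hQ, hTQ⟩ := hS' (S ∪ S') Finset.subset_union_right
  exact ⟨S ∪ S', P, Q, hP, hQ, hTP, hTQ⟩

end JointSpectral

namespace IsPVM

variable {J m n : Type*} [Fintype J] [Fintype m] [DecidableEq m]
  [Fintype n] [DecidableEq n] {P : J → Matrix n n ℂ} {Q : J → Matrix m m ℂ}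

lemma kronecker_one (hP : IsPVM P) : IsPVM fun j => P j ⊗ₖ (1 : Matrix m m ℂ) where
  isHermitian j := by
    rw [IsHermitian, conjTranspose_kronecker, conjTranspose_one, hP.isHermitian j]
  mul_self j := by rw [← mul_kronecker_mul, hP.mul_self, Matrix.one_mul]
  mul_eq_zero j k hjk := by rw [← mul_kronecker_mul, hP.mul_eq_zero j k hjk, zero_kronecker]
  sum_eq_one := by rw [← sum_kronecker, hP.sum_eq_one, one_kronecker_one]

lemma one_kronecker (hP : IsPVM P) : IsPVM fun j => (1 : Matrix m m ℂ) ⊗ₖ P j where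
  isHermitian j := by
    rw [IsHermitian, conjTranspose_kronecker, conjTranspose_one, hP.isHermitian j]
  mul_self j := by rw [← mul_kronecker_mul, hP.mul_self, Matrix.one_mul]
  mul_eq_zero j k hjk := by rw [← mul_kronecker_mul, hP.mul_eq_zero j k hjk, kronecker_zero]
  sum_eq_one := by rw [← kronecker_sum, hP.sum_eq_one, one_kronecker_one]

lemma mul_sum_smul (hP : IsPVM P) (c : J → ℂ) (j : J) : P j * ∑ k, c k • P k = c j • P j := by
  rw [Matrix.mul_sum, Fintype.sum_eq_single j fun k hk => ?_, Matrix.mul_smul, hP.mul_self]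
  rw [Matrix.mul_smul, hP.mul_eq_zero j k hk.symm, smul_zero]

lemma sum_smul_mul (hP : IsPVM P) (c : J → ℂ) (j : J) : (∑ k, c k • P k) * P j = c j • P j := by
  rw [Matrix.sum_mul, Fintype.sum_eq_single j fun k hk => ?_, Matrix.smul_mul, hP.mul_self]
  rw [Matrix.smul_mul, hP.mul_eq_zero k j hk, smul_zero]

lemma mul_eq_mul_of_intertwines {ι : Type*} (hP : IsPVM P) (hQ : IsPVM Q) {χ : J → ι → ℂ}
    (hχ : Function.Injective χ) {Z : Matrix n m ℂ}
    (hZ : ∀ i, (∑ j, χ j i • P j) * Z = Z * ∑ j, χ j i • Q j) (j : J) : P j * Z = Z * Q j := by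
  have hoff (j k : J) (hjk : j ≠ k) : P j * Z * Q k = 0 := by
    obtain ⟨i, hi⟩ := Function.ne_iff.1 (hχ.ne hjk)
    have h : χ j i • (P j * Z * Q k) = χ k i • (P j * Z * Q k) := by
      rw [← Matrix.smul_mul, ← Matrix.smul_mul, ← hP.mul_sum_smul (χ · i), Matrix.mul_assoc (P j),
        hZ, Matrix.mul_assoc, Matrix.mul_assoc, hQ.sum_smul_mul (χ · i), Matrix.mul_smul,
        Matrix.mul_smul, Matrix.mul_assoc]
    by_contra hne
    exact hi (smul_left_injective ℂ hne h)
  calc P j * Z = ∑ k, P j * Z * Q k := by rw [← Matrix.mul_sum, hQ.sum_eq_one, Matrix.mul_one]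
    _ = P j * Z * Q j := Fintype.sum_eq_single j fun k hk => hoff j k hk.symm
    _ = ∑ k, P k * Z * Q j := (Fintype.sum_eq_single j fun k hk => hoff k j hk).symm
    _ = Z * Q j := by rw [← Matrix.sum_mul, ← Matrix.sum_mul, hP.sum_eq_one, Matrix.one_mul]

end IsPVM

theorem exists_classical_label {A B C : Type*} [Fintype A] [DecidableEq A] [Fintype B]
    [DecidableEq B] [Fintype C] [DecidableEq C] {τ : Matrix ((A × B) × C) ((A × B) × C) ℂ}
    (hA : IsMarkov τ) (hB : IsMarkov (τ.submatrix (swapLeft A B C) (swapLeft A B C)))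
    (hτ : τ.PosSemidef) :
    ∃ (S : Finset (C × C → ℂ)) (P : S → Matrix A A ℂ) (Q : S → Matrix B B ℂ)
      (κ : S → Matrix C C ℂ), IsPVM P ∧ IsPVM Q ∧
      (∀ j, Commute (P j) (traceRight (traceRight τ))) ∧
      (∀ j, traceRight τ * (P j ⊗ₖ (1 : Matrix B B ℂ)) =
        traceRight τ * ((1 : Matrix A A ℂ) ⊗ₖ Q j)) ∧
      traceMiddle τ = ∑ j, (traceRight (traceRight τ) * P j) ⊗ₖ κ j := by
  obtain ⟨t, t', ht, ht', hcomm, hcomm', hcommρ, hintertwine, hblock⟩ :=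
    exists_commuting_blocks hA hB hτ
  obtain ⟨S, P, Q, hP, hQ, htP, htQ⟩ := exists_isPVM_pair_of_commute
    (T := fun p : C × C => t p.1 p.2) (T' := fun p : C × C => t' p.1 p.2)
    (fun p q => hcomm _ _ _ _) (fun p q => by rw [ht]; exact hcomm _ _ _ _)
    (fun p q => hcomm' _ _ _ _) (fun p q => by rw [ht']; exact hcomm' _ _ _ _)
  have hPt (p) : ∑ j, j.1 p • (P j ⊗ₖ (1 : Matrix B B ℂ)) = t p.1 p.2 ⊗ₖ 1 := by
    rw [htP p, sum_kronecker]
    simp only [smul_kronecker]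
  have hQt (p) : ∑ j, j.1 p • ((1 : Matrix A A ℂ) ⊗ₖ Q j) = 1 ⊗ₖ t' p.1 p.2 := by
    rw [htQ p, kronecker_sum]
    simp only [kronecker_smul]
  have hPρ (j) : (P j ⊗ₖ (1 : Matrix B B ℂ)) * traceRight τ = traceRight τ * (P j ⊗ₖ 1) :=
    hP.kronecker_one.mul_eq_mul_of_intertwines hP.kronecker_one Subtype.val_injective
      (fun p => by rw [hPt, hcommρ]) j
  have hQρ (j) : ((1 : Matrix A A ℂ) ⊗ₖ Q j) * traceRight τ = traceRight τ * (P j ⊗ₖ 1) :=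
    hQ.one_kronecker.mul_eq_mul_of_intertwines hP.kronecker_one Subtype.val_injective
      (fun p => by rw [hPt, hQt, hintertwine]) j
  refine ⟨S, P, Q, fun j => of fun i k => j.1 (i, k), hP, hQ, fun j => ?_, fun j => ?_, ?_⟩
  · rw [Commute, SemiconjBy, ← traceRight_kronecker_one_mul, hPρ, traceRight_mul_kronecker_one]
  · have h := congrArg conjTranspose (hQρ j)
    rw [conjTranspose_mul, conjTranspose_mul, hP.kronecker_one.isHermitian j,
      hQ.one_kronecker.isHermitian j, (posSemidef_traceRight hτ).1.eq] at h
    rw [h, hPρ]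
  · ext ⟨a, i⟩ ⟨a', k⟩
    change block (traceMiddle τ) i k a a' = _
    rw [hblock, htP (i, k)]
    simp [Matrix.mul_sum, Matrix.sum_apply, mul_comm]

/-! ### Recording the outcome of a measurement -/

/-- The column with entries `P j`. For a measurement `P` this is the isometry which writes the
outcome into a new register `J`. -/
def stack {J n : Type*} (P : J → Matrix n n ℂ) : Matrix (n × J) n ℂ :=
  of fun p => P p.2 p.1

/-- The unnormalized state of `A ⊗ C`, given the outcome `K` of a measurement of `B`. -/
def condMiddle {A B C : Type*} [Fintype A] [DecidableEq A] [Fintype B] [Fintype C] [DecidableEq C]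
    (K : Matrix B B ℂ) (M : Matrix ((A × B) × C) ((A × B) × C) ℂ) : Matrix (A × C) (A × C) ℂ :=
  traceMiddle (M * (((1 : Matrix A A ℂ) ⊗ₖ K) ⊗ₖ (1 : Matrix C C ℂ)))

/-- The state of `A ⊗ J ⊗ B ⊗ C` after recording in `J` the outcome of a measurement of `B`. -/
def recordMiddle {A B C J : Type*} [Fintype A] [DecidableEq A] [Fintype B] [Fintype C]
    [DecidableEq C] (P : J → Matrix B B ℂ) (M : Matrix ((A × B) × C) ((A × B) × C) ℂ) :
    Matrix (((A × J) × B) × C) (((A × J) × B) × C) ℂ :=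
  let V := stack (fun j => (1 : Matrix A A ℂ) ⊗ₖ P j) ⊗ₖ (1 : Matrix C C ℂ)
  let e := (swapRight A B J).prodCongr (Equiv.refl C)
  (V * M * Vᴴ).submatrix e e

section Stack

variable {J n : Type*} [Fintype n]

lemma stack_mul_mul_conjTranspose_apply (P : J → Matrix n n ℂ) (M : Matrix n n ℂ) (p q : n × J) :
    (stack P * M * (stack P)ᴴ) p q = (P p.2 * M * (P q.2)ᴴ) p.1 q.1 :=
  rfl

variable [Fintype J] [DecidableEq n] {P : J → Matrix n n ℂ}

lemma conjTranspose_stack_mul_stack (hP : IsPVM P) : (stack P)ᴴ * stack P = 1 := by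
  have h : (stack P)ᴴ * stack P = ∑ j, (P j)ᴴ * P j := by
    ext x y
    simp [stack, Matrix.mul_apply, Fintype.sum_prod_type_right, Matrix.sum_apply]
  simp only [h, (hP.isHermitian _).eq, hP.mul_self, hP.sum_eq_one]

lemma entropy_eq_sum_of_commute (hP : IsPVM P) {M : Matrix n n ℂ} (hM : ∀ j, Commute (P j) M) :
    entropy M = ∑ j, entropy (M * P j) := by
  classical
  have h : stack P * M * (stack P)ᴴ = blockDiagonal fun j => M * P j := by
    ext ⟨x, j⟩ ⟨y, k⟩
    rw [stack_mul_mul_conjTranspose_apply, (hP.isHermitian k).eq, (hM j).eq, Matrix.mul_assoc,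
      blockDiagonal_apply]
    by_cases hjk : j = k
    · simp [hjk, hP.mul_self]
    · simp [hjk, hP.mul_eq_zero j k hjk]
  rw [← entropy_isometry (conjTranspose_stack_mul_stack hP), h, entropy_blockDiagonal]

end Stack

section CondMiddle

variable {A B C : Type*} [Fintype A] [DecidableEq A] [Fintype B] [Fintype C] [DecidableEq C]
  {M : Matrix ((A × B) × C) ((A × B) × C) ℂ}

lemma traceRight_one_kronecker_mul (K : Matrix B B ℂ) (M : Matrix (A × B) (A × B) ℂ) :
    traceRight (((1 : Matrix A A ℂ) ⊗ₖ K) * M) = traceRight (M * ((1 : Matrix A A ℂ) ⊗ₖ K)) := by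
  ext a a'
  simp only [traceRight, of_apply, Matrix.mul_apply, Fintype.sum_prod_type, kroneckerMap_apply,
    Matrix.one_apply, ite_mul, one_mul, zero_mul, mul_ite, mul_zero, Finset.sum_ite_irrel,
    Finset.sum_const_zero, Finset.sum_ite_eq, Finset.sum_ite_eq', Finset.mem_univ, if_true]
  rw [Finset.sum_comm]
  simp only [mul_comm]

lemma block_condMiddle (K : Matrix B B ℂ) (M : Matrix ((A × B) × C) ((A × B) × C) ℂ) (i j : C) :
    block (condMiddle K M) i j = traceRight (block M i j * ((1 : Matrix A A ℂ) ⊗ₖ K)) := by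
  rw [condMiddle, block_traceMiddle, block_mul_kronecker_one]

lemma condMiddle_mul (K L : Matrix B B ℂ) (M : Matrix ((A × B) × C) ((A × B) × C) ℂ) :
    condMiddle (K * L) M = traceMiddle ((((1 : Matrix A A ℂ) ⊗ₖ L) ⊗ₖ (1 : Matrix C C ℂ)) * M *
      (((1 : Matrix A A ℂ) ⊗ₖ K) ⊗ₖ (1 : Matrix C C ℂ))) := by
  ext ⟨a, i⟩ ⟨a', j⟩
  change block (condMiddle _ _) i j a a' = block (traceMiddle _) i j a a'
  rw [block_condMiddle, block_traceMiddle, block_kronecker_mul_mul_kronecker, Matrix.mul_assoc,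
    traceRight_one_kronecker_mul, Matrix.mul_assoc, ← mul_kronecker_mul, Matrix.one_mul]

lemma posSemidef_condMiddle (hM : M.PosSemidef) {K : Matrix B B ℂ} (hK : K.IsHermitian)
    (hKK : K * K = K) : (condMiddle K M).PosSemidef := by
  have h := hM.mul_mul_conjTranspose_same (((1 : Matrix A A ℂ) ⊗ₖ K) ⊗ₖ (1 : Matrix C C ℂ))
  simp only [conjTranspose_kronecker, conjTranspose_one, hK.eq] at h
  rw [← hKK, condMiddle_mul]
  exact posSemidef_traceMiddle h

lemma traceRight_condMiddle (K : Matrix B B ℂ) (M : Matrix ((A × B) × C) ((A × B) × C) ℂ) :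
    traceRight (condMiddle K M) = traceRight (traceRight M * ((1 : Matrix A A ℂ) ⊗ₖ K)) := by
  rw [condMiddle, traceRight_traceMiddle, traceRight_mul_kronecker_one]

lemma condMiddle_sum {J : Type*} (s : Finset J) (K : J → Matrix B B ℂ)
    (M : Matrix ((A × B) × C) ((A × B) × C) ℂ) :
    condMiddle (∑ j ∈ s, K j) M = ∑ j ∈ s, condMiddle (K j) M := by
  ext p q
  simp only [condMiddle, kronecker_sum, sum_kronecker, Matrix.mul_sum, traceMiddle, of_apply,
    Matrix.sum_apply]
  exact Finset.sum_comm

variable {J : Type*} [Fintype J] [DecidableEq B] {P : J → Matrix B B ℂ}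

lemma sum_condMiddle (hP : IsPVM P) (M : Matrix ((A × B) × C) ((A × B) × C) ℂ) :
    ∑ j, condMiddle (P j) M = traceMiddle M := by
  rw [← condMiddle_sum, hP.sum_eq_one, condMiddle, one_kronecker_one, one_kronecker_one,
    Matrix.mul_one]

section RecordMiddle

variable [DecidableEq J]

lemma entropy_recordMiddle (hP : IsPVM P) (M : Matrix ((A × B) × C) ((A × B) × C) ℂ) :
    entropy (recordMiddle P M) = entropy M := by
  rw [recordMiddle, entropy_submatrix, entropy_isometry]
  rw [conjTranspose_kronecker, conjTranspose_one, ← mul_kronecker_mul, Matrix.one_mul,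
    conjTranspose_stack_mul_stack hP.one_kronecker, one_kronecker_one]

lemma entropy_traceRight_recordMiddle (hP : IsPVM P)
    (M : Matrix ((A × B) × C) ((A × B) × C) ℂ) :
    entropy (traceRight (recordMiddle P M)) = entropy (traceRight M) := by
  set V := stack fun j => (1 : Matrix A A ℂ) ⊗ₖ P j
  have h : traceRight (recordMiddle P M) =
      (V * traceRight M * Vᴴ).submatrix (swapRight A B J) (swapRight A B J) := by
    rw [← traceRight_kronecker_mul_mul_kronecker, recordMiddle, conjTranspose_kronecker,
      conjTranspose_one]
    rfl
  rw [h, entropy_submatrix, entropy_isometry (conjTranspose_stack_mul_stack hP.one_kronecker)]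

lemma traceMiddle_recordMiddle (hP : IsPVM P) (M : Matrix ((A × B) × C) ((A × B) × C) ℂ) :
    traceMiddle (recordMiddle P M) =
      (blockDiagonal fun j => condMiddle (P j) M).submatrix (swapRight A C J)
        (swapRight A C J) := by
  ext ⟨⟨a, j⟩, i⟩ ⟨⟨a', k⟩, l⟩
  have h : traceMiddle (recordMiddle P M) ((a, j), i) ((a', k), l) =
      condMiddle (P k * P j) M (a, i) (a', l) := by
    set V := stack fun j => (1 : Matrix A A ℂ) ⊗ₖ P j
    have hentry (b : B) :
        block ((V ⊗ₖ (1 : Matrix C C ℂ)) * M * (V ⊗ₖ (1 : Matrix C C ℂ))ᴴ) i l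
            ((a, b), j) ((a', b), k) =
          (((1 : Matrix A A ℂ) ⊗ₖ P j) * block M i l * ((1 : Matrix A A ℂ) ⊗ₖ P k))
            (a, b) (a', b) := by
      rw [conjTranspose_kronecker, conjTranspose_one, block_kronecker_mul_mul_kronecker,
        stack_mul_mul_conjTranspose_apply, (hP.one_kronecker.isHermitian k).eq]
    rw [condMiddle_mul]
    change _ = traceRight (block (_ * M * _) i l) a a'
    rw [block_kronecker_mul_mul_kronecker]
    exact Finset.sum_congr rfl fun b _ => hentry b
  rw [h]
  change _ = blockDiagonal (fun j => condMiddle (P j) M) ((a, i), j) ((a', l), k)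
  rw [blockDiagonal_apply]
  by_cases hjk : j = k
  · simp [hjk, hP.mul_self]
  · simp [hjk, hP.mul_eq_zero k j (Ne.symm hjk), condMiddle, traceMiddle]

lemma traceRight_traceRight_recordMiddle (hP : IsPVM P)
    (M : Matrix ((A × B) × C) ((A × B) × C) ℂ) :
    traceRight (traceRight (recordMiddle P M)) =
      blockDiagonal fun j => traceRight (condMiddle (P j) M) := by
  rw [← traceRight_traceMiddle, traceMiddle_recordMiddle hP]
  ext ⟨a, j⟩ ⟨a', k⟩
  by_cases hjk : j = k <;> simp [traceRight, swapRight, blockDiagonal_apply, hjk]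

end RecordMiddle

theorem entropy_add_sum_entropy_condMiddle_le (hP : IsPVM P) (hM : M.PosSemidef) :
    entropy M + ∑ j, entropy (traceRight (condMiddle (P j) M)) ≤
      entropy (traceRight M) + ∑ j, entropy (condMiddle (P j) M) := by
  classical
  have hN : (recordMiddle P M).PosSemidef := (hM.mul_mul_conjTranspose_same _).submatrix _
  have hssa := strong_subadditivity hN
  rwa [entropy_recordMiddle hP, entropy_traceRight_recordMiddle hP, traceMiddle_recordMiddle hP,
    traceRight_traceRight_recordMiddle hP, entropy_submatrix, entropy_blockDiagonal,
    entropy_blockDiagonal] at hssa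

end CondMiddle

/-! ### Consequences of strong subadditivity -/

/-- The partial trace over the first tensor factor. -/
def traceLeft {X Y : Type*} [Fintype X] (M : Matrix (X × Y) (X × Y) ℂ) : Matrix Y Y ℂ :=
  of fun y y' => ∑ x, M (x, y) (x, y')

section Subadditivity

lemma entropy_zero {n : Type*} [Fintype n] [DecidableEq n] : entropy (0 : Matrix n n ℂ) = 0 := by
  simpa using entropy_diagonal (0 : n → ℝ)

lemma ofReal_re_trace {n : Type*} [Fintype n] {M : Matrix n n ℂ} (hM : M.PosSemidef) :
    (M.trace.re : ℂ) = M.trace :=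
  (Complex.eq_re_of_ofReal_le (Complex.ofReal_zero.symm ▸ hM.trace_nonneg)).symm

lemma posSemidef_blockDiagonal {J n : Type*} [Finite J] [DecidableEq J] [Finite n]
    {N : J → Matrix n n ℂ} (hN : ∀ j, (N j).PosSemidef) : (blockDiagonal N).PosSemidef := by
  cases nonempty_fintype J
  cases nonempty_fintype n
  choose q hq hqq using fun j => exists_posSemidef_mul_self_eq (hN j)
  have h : blockDiagonal N = (blockDiagonal q)ᴴ * blockDiagonal q := by
    simp only [blockDiagonal_conjTranspose, ← blockDiagonal_mul, (hq _).1.eq, hqq]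
  exact h ▸ posSemidef_conjTranspose_mul_self _

lemma entropy_sum_le {J n : Type*} [Fintype J] [Fintype n] [DecidableEq n]
    {N : J → Matrix n n ℂ} (hN : ∀ j, (N j).PosSemidef) :
    entropy (∑ j, N j) ≤ ∑ j, entropy (N j) := by
  classical
  -- Strong subadditivity for the state with two copies of the classical label `j`.
  set τ := blockDiagonal fun k => blockDiagonal fun j => if j = k then N j else 0 with hτ_def
  have hτ : τ.PosSemidef := posSemidef_blockDiagonal fun k => posSemidef_blockDiagonal fun j => by
    split_ifs
    exacts [hN j, PosSemidef.zero]
  have htotal : entropy τ = ∑ j, entropy (N j) := by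
    simp only [hτ_def, entropy_blockDiagonal, apply_ite entropy, entropy_zero]
    simp
  have hright : traceRight τ = blockDiagonal N := by
    ext ⟨x, j⟩ ⟨y, k⟩
    by_cases hjk : j = k <;>
      simp [hτ_def, traceRight, blockDiagonal_apply, hjk,
        apply_ite (fun K : Matrix n n ℂ => K x y)]
  have hmiddle : traceMiddle τ = blockDiagonal N := by
    ext ⟨x, j⟩ ⟨y, k⟩
    by_cases hjk : j = k <;>
      simp [hτ_def, traceMiddle, blockDiagonal_apply, hjk,
        apply_ite (fun K : Matrix n n ℂ => K x y)]
  have hsum : traceRight (blockDiagonal N) = ∑ j, N j := by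
    ext x y
    simp [traceRight, blockDiagonal_apply, Matrix.sum_apply]
  have hssa := strong_subadditivity hτ
  rw [htotal, hright, hmiddle, hsum, entropy_blockDiagonal] at hssa
  linarith

variable {X Y : Type*} [Fintype X]

lemma posSemidef_traceLeft {M : Matrix (X × Y) (X × Y) ℂ} (hM : M.PosSemidef) :
    (traceLeft M).PosSemidef :=
  posSemidef_traceRight (hM.submatrix (Equiv.prodComm Y X))

variable [Fintype Y]

lemma trace_traceLeft (M : Matrix (X × Y) (X × Y) ℂ) : (traceLeft M).trace = M.trace := by
  simp [traceLeft, Matrix.trace, Fintype.sum_prod_type_right]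

variable [DecidableEq X] [DecidableEq Y] {M : Matrix (X × Y) (X × Y) ℂ}

lemma entropy_add_negMulLog_trace_le (hM : M.PosSemidef) :
    entropy M + Real.negMulLog M.trace.re ≤ entropy (traceRight M) + entropy (traceLeft M) := by
  set u := Equiv.punitProd.{0} X
  set v := Equiv.punitProd.{0} Y
  set e := u.prodCongr (Equiv.refl Y)
  have hssa := strong_subadditivity (hM.submatrix e)
  have hright : traceRight (M.submatrix e e) = (traceRight M).submatrix u u := rfl
  have hmiddle : traceMiddle (M.submatrix e e) = (traceLeft M).submatrix v v := rfl
  have htrace : traceRight ((traceRight M).submatrix u u) =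
      diagonal fun _ => (M.trace.re : ℂ) := by
    ext x y
    rw [ofReal_re_trace hM, ← trace_traceRight]
    simp [traceRight, Matrix.trace, u]
  rw [hright, hmiddle, htrace, entropy_diagonal, entropy_submatrix, entropy_submatrix,
    entropy_submatrix] at hssa
  simpa using hssa

lemma entropy_add_negMulLog_trace_eq (hM : M.PosSemidef) {κ : Matrix Y Y ℂ}
    (hκ : M = traceRight M ⊗ₖ κ) :
    entropy M + Real.negMulLog M.trace.re = entropy (traceRight M) + entropy (traceLeft M) := by
  by_cases hzero : M.trace = 0
  · rw [(posSemidef_traceRight hM).trace_eq_zero_iff.1 ((trace_traceRight M).trans hzero),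
      (posSemidef_traceLeft hM).trace_eq_zero_iff.1 ((trace_traceLeft M).trans hzero),
      hM.trace_eq_zero_iff.1 hzero]
    simp [entropy_zero]
  have hleft : traceLeft M = M.trace • κ := by
    rw [← trace_traceRight]
    conv_lhs => rw [hκ]
    ext y y'
    simp [traceLeft, Matrix.trace, Finset.sum_mul]
  have hsmul : (M.trace.re : ℂ) • M = traceRight M ⊗ₖ traceLeft M := by
    rw [ofReal_re_trace hM, hleft, kronecker_smul, ← hκ]
  have hentropy := congrArg entropy hsmul
  rw [entropy_smul hM, entropy_kronecker (posSemidef_traceRight hM) (posSemidef_traceLeft hM),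
    trace_traceRight, trace_traceLeft] at hentropy
  have hre : M.trace.re ≠ 0 := fun h => hzero (by rw [← ofReal_re_trace hM, h, Complex.ofReal_zero])
  refine mul_left_cancel₀ hre ?_
  linear_combination hentropy

end Subadditivity

section Label

variable {J A C : Type*} [Fintype J] [Fintype A] [DecidableEq A] [Fintype C] [DecidableEq C]

lemma IsPVM.commute {P : J → Matrix A A ℂ} (hP : IsPVM P) (j k : J) : Commute (P j) (P k) := by
  rcases eq_or_ne j k with rfl | hjk
  · exact Commute.refl _
  · rw [Commute, SemiconjBy, hP.mul_eq_zero j k hjk, hP.mul_eq_zero k j hjk.symm]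

lemma IsPVM.posSemidef_mul {n : Type*} [Fintype n] [DecidableEq n] {P : J → Matrix n n ℂ}
    (hP : IsPVM P) {M : Matrix n n ℂ} (hM : M.PosSemidef) {j : J} (hPM : Commute (P j) M) :
    (M * P j).PosSemidef := by
  have h := hM.mul_mul_conjTranspose_same (P j)
  rwa [(hP.isHermitian j).eq, hPM.eq, Matrix.mul_assoc, hP.mul_self] at h

lemma sum_entropy_traceLeft_eq {P : J → Matrix A A ℂ} (hP : IsPVM P)
    {M : Matrix (A × C) (A × C) ℂ} (hM : M.PosSemidef)
    (hcomm : ∀ j, Commute (P j) (traceRight M)) {κ : J → Matrix C C ℂ}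
    (hκ : M = ∑ j, (traceRight M * P j) ⊗ₖ κ j) :
    ∑ j, (entropy (traceLeft (M * (P j ⊗ₖ (1 : Matrix C C ℂ)))) -
        Real.negMulLog (M * (P j ⊗ₖ (1 : Matrix C C ℂ))).trace.re) =
      entropy M - entropy (traceRight M) := by
  have hmul (j) : M * (P j ⊗ₖ (1 : Matrix C C ℂ)) = (traceRight M * P j) ⊗ₖ κ j := by
    conv_lhs => rw [hκ]
    rw [Matrix.sum_mul, Fintype.sum_eq_single j fun k hk => ?_]
    · rw [← mul_kronecker_mul, Matrix.mul_assoc, hP.mul_self, Matrix.mul_one]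
    · rw [← mul_kronecker_mul, Matrix.mul_assoc, hP.mul_eq_zero k j hk, Matrix.mul_zero,
        zero_kronecker]
  have hcomm' (j) : Commute (P j ⊗ₖ (1 : Matrix C C ℂ)) M := by
    rw [hκ]
    refine Commute.sum_right _ _ _ fun k _ => ?_
    rw [Commute, SemiconjBy, ← mul_kronecker_mul, ← mul_kronecker_mul, Matrix.one_mul,
      Matrix.mul_one, ((hcomm j).mul_right (hP.commute j k)).eq]
  rw [entropy_eq_sum_of_commute hP.kronecker_one hcomm', entropy_eq_sum_of_commute hP hcomm,
    ← Finset.sum_sub_distrib]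
  refine Finset.sum_congr rfl fun j _ => ?_
  have hprod := entropy_add_negMulLog_trace_eq (κ := κ j)
    (hP.kronecker_one.posSemidef_mul hM (hcomm' j))
    (by rw [traceRight_mul_kronecker_one, hmul])
  rw [traceRight_mul_kronecker_one] at hprod
  linarith

end Label

/-! ### The inequality for compatible tripartite states -/

/-- The partial trace over the first factor of `D ⊗ A ⊗ B`. -/
def traceFirst {D A B : Type*} [Fintype D] (M : Matrix ((D × A) × B) ((D × A) × B) ℂ) :
    Matrix (A × B) (A × B) ℂ :=
  of fun p q => ∑ d, M ((d, p.1), p.2) ((d, q.1), q.2)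

section Compatible

variable {A B C D : Type*} [Fintype A] [Fintype B] [DecidableEq B] [Fintype C] [DecidableEq C]
  [Fintype D] [DecidableEq D]
  {τ : Matrix ((A × B) × C) ((A × B) × C) ℂ} {μ : Matrix ((D × A) × B) ((D × A) × B) ℂ}
  {ν : Matrix ((D × A) × C) ((D × A) × C) ℂ}

lemma traceLeft_condMiddle (K : Matrix A A ℂ) (ν : Matrix ((D × A) × C) ((D × A) × C) ℂ) :
    traceLeft (condMiddle K ν) = traceLeft (traceFirst ν * (K ⊗ₖ (1 : Matrix C C ℂ))) := by
  ext i j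
  simp only [traceLeft, condMiddle, traceMiddle, traceFirst, of_apply, Matrix.mul_apply,
    Fintype.sum_prod_type, kroneckerMap_apply, Matrix.one_apply, mul_ite, mul_one, mul_zero,
    ite_mul, one_mul, zero_mul, Finset.sum_ite_eq', Finset.sum_ite_irrel, Finset.sum_const_zero,
    Finset.mem_univ, if_true, Finset.sum_mul]
  rw [Finset.sum_comm]
  exact Finset.sum_congr rfl fun a _ => Finset.sum_comm

variable [DecidableEq A]

lemma condMiddle_eq_traceMiddle_mul (hμ : μ.PosSemidef) {K : Matrix A A ℂ} {L : Matrix B B ℂ}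
    (h : traceFirst μ * (K ⊗ₖ (1 : Matrix B B ℂ)) = traceFirst μ * ((1 : Matrix A A ℂ) ⊗ₖ L)) :
    condMiddle K μ = traceMiddle μ * ((1 : Matrix D D ℂ) ⊗ₖ L) := by
  let e : (A × B) × D ≃ (D × A) × B := (Equiv.prodComm _ _).trans (Equiv.prodAssoc _ _ _).symm
  have hzero : μ.submatrix e e * ((K ⊗ₖ 1 - 1 ⊗ₖ L) ⊗ₖ (1 : Matrix D D ℂ)) = 0 :=
    mul_kronecker_one_eq_zero (hμ.submatrix e) ((Matrix.mul_sub _ _ _).trans (sub_eq_zero.2 h))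
  have hblock (d d' : D) : block (μ.submatrix e e) d d' * (K ⊗ₖ 1) =
      block (μ.submatrix e e) d d' * (1 ⊗ₖ L) := by
    rw [← sub_eq_zero, ← Matrix.mul_sub, ← block_mul_kronecker_one, hzero]
    rfl
  ext ⟨d, b⟩ ⟨d', b'⟩
  have hentry := Finset.sum_congr (s₁ := Finset.univ) rfl fun a _ =>
    congrFun₂ (hblock d d') (a, b) (a, b')
  simp only [condMiddle, traceMiddle, of_apply, Matrix.mul_apply, Fintype.sum_prod_type,
    kroneckerMap_apply, Matrix.one_apply, mul_ite, mul_one, mul_zero, ite_mul, one_mul, zero_mul,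
    Finset.sum_ite_eq', Finset.sum_ite_irrel, Finset.sum_const_zero, Finset.mem_univ, if_true,
    Finset.sum_mul, block, submatrix_apply] at hentry ⊢
  exact hentry.trans Finset.sum_comm

lemma sum_entropy_condMiddle_eq {J : Type*} [Fintype J] {P : J → Matrix A A ℂ}
    {Q : J → Matrix B B ℂ} (hμ : μ.PosSemidef) (hP : IsPVM P) (hQ : IsPVM Q)
    (hPQ : ∀ j, traceFirst μ * (P j ⊗ₖ (1 : Matrix B B ℂ)) =
      traceFirst μ * ((1 : Matrix A A ℂ) ⊗ₖ Q j)) :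
    ∑ j, entropy (condMiddle (P j) μ) = entropy (traceMiddle μ) := by
  have heq (j) := condMiddle_eq_traceMiddle_mul hμ (hPQ j)
  have hcomm (j) : Commute ((1 : Matrix D D ℂ) ⊗ₖ Q j) (traceMiddle μ) := by
    have hherm := (posSemidef_condMiddle hμ (hP.isHermitian j) (hP.mul_self j)).1
    rw [heq, IsHermitian, conjTranspose_mul, (hQ.one_kronecker.isHermitian j).eq,
      (posSemidef_traceMiddle hμ).1.eq] at hherm
    exact hherm
  rw [entropy_eq_sum_of_commute hQ.one_kronecker hcomm]
  exact Finset.sum_congr rfl fun j _ => congrArg entropy (heq j)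

theorem entropy_add_entropy_le_of_isMarkov (hτ : τ.PosSemidef) (hμ : μ.PosSemidef)
    (hν : ν.PosSemidef) (hAB : traceRight τ = traceFirst μ) (hAC : traceMiddle τ = traceFirst ν)
    (hDA : traceRight μ = traceRight ν) (hMA : IsMarkov τ)
    (hMB : IsMarkov (τ.submatrix (swapLeft A B C) (swapLeft A B C))) (hMD : IsMarkov μ) :
    entropy (traceMiddle ν) + entropy (traceRight (traceRight τ)) ≤
      entropy (traceRight (traceRight ν)) + entropy (traceMiddle τ) := by
  obtain ⟨S, P, Q, κ, hP, hQ, hcomm, hPQ, hκ⟩ := exists_classical_label hMA hMB hτ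
  rw [← traceRight_traceMiddle] at hcomm hκ ⊢
  have hmix : entropy (traceMiddle ν) ≤ ∑ j, entropy (condMiddle (P j) ν) := by
    rw [← sum_condMiddle hP]
    exact entropy_sum_le fun j => posSemidef_condMiddle hν (hP.isHermitian j) (hP.mul_self j)
  have hsub : ∑ j, entropy (condMiddle (P j) ν) ≤ ∑ j, entropy (traceRight (condMiddle (P j) ν)) +
      (entropy (traceMiddle τ) - entropy (traceRight (traceMiddle τ))) := by
    rw [← sum_entropy_traceLeft_eq hP (posSemidef_traceMiddle hτ) hcomm hκ,
      ← Finset.sum_add_distrib]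
    refine Finset.sum_le_sum fun j _ => ?_
    have h := entropy_add_negMulLog_trace_le
      (posSemidef_condMiddle hν (hP.isHermitian j) (hP.mul_self j))
    rw [← trace_traceLeft, traceLeft_condMiddle, trace_traceLeft] at h
    rw [hAC]
    linarith
  have hmeasure : ∑ j, entropy (traceRight (condMiddle (P j) ν)) ≤
      entropy (traceRight (traceRight ν)) := by
    have h := entropy_add_sum_entropy_condMiddle_le hP hμ
    rw [sum_entropy_condMiddle_eq hμ hP hQ (fun j => hAB ▸ hPQ j)] at h
    simp only [traceRight_condMiddle, hDA] at h ⊢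
    rw [IsMarkov, hDA] at hMD
    linarith
  linarith

end Compatible

/-! ### Purification -/

/-- The state of `D ⊗ A ⊗ B`, with the factors in this order, of a state of `A ⊗ B ⊗ C ⊗ D`. -/
def marginalDAB {A B C D : Type*} [Fintype C] (ρ : Matrix (A × B × C × D) (A × B × C × D) ℂ) :
    Matrix ((D × A) × B) ((D × A) × B) ℂ :=
  of fun p q => ∑ c, ρ (p.1.2, p.2, c, p.1.1) (q.1.2, q.2, c, q.1.1)

/-- The amplitudes of the vector `ψ` in `(A ⊗ B ⊗ C ⊗ D) ⊗ E`, arranged as a matrix from `C ⊗ D`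
to `A ⊗ B ⊗ E`. -/
def amplitudeABE {A B C D E : Type*} (ψ : Matrix (A × B × C × D) E ℂ) :
    Matrix ((A × B) × E) (C × D) ℂ :=
  of fun p r => ψ (p.1.1, p.1.2, r.1, r.2) p.2

/-- The amplitudes of the vector `ψ` in `(A ⊗ B ⊗ C ⊗ D) ⊗ E`, arranged as a matrix from `B ⊗ C`
to `D ⊗ A ⊗ E`. -/
def amplitudeDAE {A B C D E : Type*} (ψ : Matrix (A × B × C × D) E ℂ) :
    Matrix ((D × A) × E) (B × C) ℂ :=
  of fun p r => ψ (p.1.2, r.1, r.2, p.1.1) p.2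

-- The two sides are the complementary reduced states of the pure state with amplitudes `T`.
lemma log_two_mul_vNEntropy_mul_conjTranspose {m n : Type*} [Fintype m] [DecidableEq m]
    [Fintype n] [DecidableEq n] (T : Matrix m n ℂ) :
    Real.log 2 * vNEntropy (T * Tᴴ) = entropy (Tᵀ * Tᵀᴴ) := by
  rw [log_two_mul_vNEntropy (isHermitian_mul_conjTranspose_self T), entropy_mul_comm,
    ← entropy_transpose, transpose_mul]
  rfl

section Compatibility

variable {A B C D E : Type*} [Fintype C]

lemma posSemidef_marginalDAB {ρ : Matrix (A × B × C × D) (A × B × C × D) ℂ}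
    (hρ : ρ.PosSemidef) : (marginalDAB ρ).PosSemidef := by
  have h : marginalDAB ρ = ∑ c, ρ.submatrix (fun p => (p.1.2, p.2, c, p.1.1))
      (fun p => (p.1.2, p.2, c, p.1.1)) := by
    ext p q
    simp [marginalDAB, Matrix.sum_apply]
  rw [h]
  exact posSemidef_sum _ fun c _ => hρ.submatrix _

variable [Fintype B] (ψ : Matrix (A × B × C × D) E ℂ)

lemma traceRight_marginalDAB_eq [Fintype E] : traceRight (marginalDAB (ψ * ψᴴ)) =
    traceRight (amplitudeDAE ψ * (amplitudeDAE ψ)ᴴ) := by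
  ext p q
  simp only [traceRight, marginalDAB, amplitudeDAE, of_apply, Matrix.mul_apply,
    conjTranspose_apply, Fintype.sum_prod_type]
  rw [Finset.sum_comm (γ := E)]
  exact Finset.sum_congr rfl fun b _ => Finset.sum_comm.symm

variable [Fintype D]

lemma traceMiddle_amplitudeABE_eq_traceFirst : traceMiddle (amplitudeABE ψ * (amplitudeABE ψ)ᴴ) =
    traceFirst (amplitudeDAE ψ * (amplitudeDAE ψ)ᴴ) := by
  ext p q
  simp only [traceMiddle, traceFirst, amplitudeABE, amplitudeDAE, of_apply, Matrix.mul_apply,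
    conjTranspose_apply, Fintype.sum_prod_type]
  rw [Finset.sum_comm (γ := D)]
  exact Finset.sum_congr rfl fun b _ => Finset.sum_comm

end Compatibility

section Marginals

variable {A B C D E : Type*} [Fintype C] [Fintype D] [Fintype E] (ψ : Matrix (A × B × C × D) E ℂ)

lemma traceRight_amplitudeABE_eq : traceRight (amplitudeABE ψ * (amplitudeABE ψ)ᴴ) =
    of fun p q => ∑ c, ∑ d, (ψ * ψᴴ) (p.1, p.2, c, d) (q.1, q.2, c, d) := by
  ext p q
  simp only [traceRight, amplitudeABE, of_apply, Matrix.mul_apply, conjTranspose_apply,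
    Fintype.sum_prod_type]
  rw [Finset.sum_comm]
  exact Finset.sum_congr rfl fun c _ => Finset.sum_comm

lemma traceRight_amplitudeABE_eq_traceFirst : traceRight (amplitudeABE ψ * (amplitudeABE ψ)ᴴ) =
    traceFirst (marginalDAB (ψ * ψᴴ)) := by
  rw [traceRight_amplitudeABE_eq]
  ext p q
  exact Finset.sum_comm

variable [Fintype A] [Fintype B]

lemma log_two_mul_SA [DecidableEq A] : Real.log 2 * SA (ψ * ψᴴ) =
    entropy (traceRight (traceRight (amplitudeABE ψ * (amplitudeABE ψ)ᴴ))) := by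
  rw [← log_two_mul_vNEntropy
    (posSemidef_traceRight (posSemidef_traceRight (posSemidef_self_mul_conjTranspose _))).1,
    traceRight_amplitudeABE_eq]
  rfl

lemma log_two_mul_SB [DecidableEq B] : Real.log 2 * SB (ψ * ψᴴ) =
    entropy (traceLeft (traceRight (amplitudeABE ψ * (amplitudeABE ψ)ᴴ))) := by
  rw [← log_two_mul_vNEntropy
    (posSemidef_traceLeft (posSemidef_traceRight (posSemidef_self_mul_conjTranspose _))).1,
    traceRight_amplitudeABE_eq]
  rfl

variable [DecidableEq A] [DecidableEq B]

lemma log_two_mul_SAB : Real.log 2 * SAB (ψ * ψᴴ) =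
    entropy (traceRight (amplitudeABE ψ * (amplitudeABE ψ)ᴴ)) := by
  rw [SAB, ← traceRight_amplitudeABE_eq]
  exact log_two_mul_vNEntropy (posSemidef_traceRight (posSemidef_self_mul_conjTranspose _)).1

variable [DecidableEq C] [DecidableEq D] [DecidableEq E]

lemma log_two_mul_SCD : Real.log 2 * SCD (ψ * ψᴴ) =
    entropy (amplitudeABE ψ * (amplitudeABE ψ)ᴴ) := by
  rw [SCD, ← transpose_transpose (amplitudeABE ψ), ← log_two_mul_vNEntropy_mul_conjTranspose]
  congr 2
  ext p q
  simp [amplitudeABE, Matrix.mul_apply, Fintype.sum_prod_type]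

lemma log_two_mul_SBCD : Real.log 2 * SBCD (ψ * ψᴴ) =
    entropy (traceMiddle (amplitudeABE ψ * (amplitudeABE ψ)ᴴ)) := by
  convert log_two_mul_vNEntropy_mul_conjTranspose
    (of fun (r : B × C × D) (p : A × E) => ψ (p.1, r) p.2) using 2
  · rw [SBCD]
    congr 1
    ext p q
    simp [Matrix.mul_apply, Fintype.sum_prod_type]
  · ext p q
    simp [amplitudeABE, traceMiddle, Matrix.mul_apply, Fintype.sum_prod_type]

lemma log_two_mul_SACD : Real.log 2 * SACD (ψ * ψᴴ) =
    entropy (traceFirst (amplitudeABE ψ * (amplitudeABE ψ)ᴴ)) := by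
  convert log_two_mul_vNEntropy_mul_conjTranspose
    (of fun (r : A × C × D) (p : B × E) => ψ (r.1, p.1, r.2) p.2) using 2
  · rw [SACD]
    congr 1
    ext p q
    simp [Matrix.mul_apply, Fintype.sum_prod_type]
  · ext p q
    simp [amplitudeABE, traceFirst, Matrix.mul_apply, Fintype.sum_prod_type]

lemma log_two_mul_SABC : Real.log 2 * SABC (ψ * ψᴴ) =
    entropy (traceMiddle (amplitudeDAE ψ * (amplitudeDAE ψ)ᴴ)) := by
  convert log_two_mul_vNEntropy_mul_conjTranspose
    (of fun (r : A × B × C) (p : D × E) => ψ (r.1, r.2.1, r.2.2, p.1) p.2) using 2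
  · rw [SABC]
    congr 1
    ext p q
    simp [Matrix.mul_apply, Fintype.sum_prod_type]
  · ext p q
    simp [amplitudeDAE, traceMiddle, Matrix.mul_apply, Fintype.sum_prod_type]

end Marginals

section MarginalsDAB

variable {A B C D : Type*} [Fintype A] [Fintype B] [Fintype C] [Fintype D] [DecidableEq D]
  {ρ : Matrix (A × B × C × D) (A × B × C × D) ℂ}

lemma log_two_mul_SD (hρ : ρ.PosSemidef) :
    Real.log 2 * SD ρ = entropy (traceRight (traceRight (marginalDAB ρ))) :=
  log_two_mul_vNEntropy
    (posSemidef_traceRight (posSemidef_traceRight (posSemidef_marginalDAB hρ))).1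

lemma log_two_mul_SAD [DecidableEq A] (hρ : ρ.PosSemidef) :
    Real.log 2 * SAD ρ = entropy (traceRight (marginalDAB ρ)) := by
  have h := (posSemidef_traceRight (posSemidef_marginalDAB hρ)).submatrix (Equiv.prodComm A D)
  rw [← entropy_submatrix (Equiv.prodComm A D), ← log_two_mul_vNEntropy h.1]
  rfl

lemma log_two_mul_SBD [DecidableEq B] (hρ : ρ.PosSemidef) :
    Real.log 2 * SBD ρ = entropy (traceMiddle (marginalDAB ρ)) := by
  have h := (posSemidef_traceMiddle (posSemidef_marginalDAB hρ)).submatrix (Equiv.prodComm B D)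
  rw [← entropy_submatrix (Equiv.prodComm B D), ← log_two_mul_vNEntropy h.1]
  rfl

lemma log_two_mul_SABD [DecidableEq A] [DecidableEq B] (hρ : ρ.PosSemidef) :
    Real.log 2 * SABD ρ = entropy (marginalDAB ρ) := by
  let e : A × B × D ≃ (D × A) × B :=
    (Equiv.prodAssoc A B D).symm.trans ((Equiv.prodComm _ _).trans (Equiv.prodAssoc D A B).symm)
  rw [← entropy_submatrix e, ← log_two_mul_vNEntropy ((posSemidef_marginalDAB hρ).submatrix e).1]
  rfl

end MarginalsDAB

section IsMarkov

variable {A B C D : Type*} [Fintype A] [DecidableEq A] [Fintype B] [DecidableEq B]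
  [Fintype C] [Fintype D] [DecidableEq D]

lemma isMarkov_marginalDAB {ρ : Matrix (A × B × C × D) (A × B × C × D) ℂ} (hρ : ρ.PosSemidef)
    (h : SAD ρ + SBD ρ - SABD ρ - SD ρ = 0) : IsMarkov (marginalDAB ρ) := by
  rw [IsMarkov, ← log_two_mul_SABD hρ, ← log_two_mul_SD hρ, ← log_two_mul_SAD hρ,
    ← log_two_mul_SBD hρ]
  linear_combination -Real.log 2 * h

variable [DecidableEq C] {E : Type*} [Fintype E] [DecidableEq E] {ψ : Matrix (A × B × C × D) E ℂ}

lemma isMarkov_amplitudeABE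
    (h : (SAB (ψ * ψᴴ) - SA (ψ * ψᴴ)) + (SBCD (ψ * ψᴴ) - SCD (ψ * ψᴴ)) = 0) :
    IsMarkov (amplitudeABE ψ * (amplitudeABE ψ)ᴴ) := by
  rw [IsMarkov, ← log_two_mul_SCD, ← log_two_mul_SA, ← log_two_mul_SAB, ← log_two_mul_SBCD]
  linear_combination -Real.log 2 * h

lemma isMarkov_amplitudeABE_submatrix_swapLeft
    (h : (SAB (ψ * ψᴴ) - SB (ψ * ψᴴ)) + (SACD (ψ * ψᴴ) - SCD (ψ * ψᴴ)) = 0) :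
    IsMarkov ((amplitudeABE ψ * (amplitudeABE ψ)ᴴ).submatrix (swapLeft A B E)
      (swapLeft A B E)) := by
  set τ := amplitudeABE ψ * (amplitudeABE ψ)ᴴ with hτ
  have hright : traceRight (τ.submatrix (swapLeft A B E) (swapLeft A B E)) =
      (traceRight τ).submatrix (Equiv.prodComm B A) (Equiv.prodComm B A) := rfl
  have hleft : traceRight ((traceRight τ).submatrix (Equiv.prodComm B A) (Equiv.prodComm B A)) =
      traceLeft (traceRight τ) := rfl
  have hmiddle : traceMiddle (τ.submatrix (swapLeft A B E) (swapLeft A B E)) = traceFirst τ := rfl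
  rw [IsMarkov, hright, hleft, hmiddle, entropy_submatrix, entropy_submatrix, hτ,
    ← log_two_mul_SCD, ← log_two_mul_SB, ← log_two_mul_SAB, ← log_two_mul_SACD]
  linear_combination -Real.log 2 * h

end IsMarkov

/-- **Theorem 1″ (3).** If `S(B|A)+S(B|CD) = 0`, `S(A|B)+S(A|CD) = 0` and
`I(A;B|D) = 0`, then `S(D)+S(CD) ≥ S(AB)+S(ABC)`. -/
theorem constrained_inequality''_three
    {A B C D : Type*} [Fintype A] [DecidableEq A] [Fintype B] [DecidableEq B]
    [Fintype C] [DecidableEq C] [Fintype D] [DecidableEq D]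
    (ρ : Matrix (A × B × C × D) (A × B × C × D) ℂ) (hρ : IsState ρ)
    (h1 : (SAB ρ - SA ρ) + (SBCD ρ - SCD ρ) = 0)
    (h2 : (SAB ρ - SB ρ) + (SACD ρ - SCD ρ) = 0)
    (h3 : SAD ρ + SBD ρ - SABD ρ - SD ρ = 0) :
    SAB ρ + SABC ρ ≤ SD ρ + SCD ρ := by
  obtain ⟨ψ, rfl⟩ := exists_eq_mul_conjTranspose hρ.1
  have hle := entropy_add_entropy_le_of_isMarkov (posSemidef_self_mul_conjTranspose _)
    (posSemidef_marginalDAB hρ.1) (posSemidef_self_mul_conjTranspose _)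
    (traceRight_amplitudeABE_eq_traceFirst ψ) (traceMiddle_amplitudeABE_eq_traceFirst ψ)
    (traceRight_marginalDAB_eq ψ) (isMarkov_amplitudeABE h1)
    (isMarkov_amplitudeABE_submatrix_swapLeft h2) (isMarkov_marginalDAB hρ.1 h3)
  rw [← traceRight_marginalDAB_eq, ← log_two_mul_SABC, ← log_two_mul_SA, ← log_two_mul_SBCD,
    ← log_two_mul_SD hρ.1, ← mul_add, ← mul_add] at hle
  have h := le_of_mul_le_mul_left hle (Real.log_pos one_lt_two)
  linarith
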